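/- arXiv:1507.08328 — 8 statements merged into one kernel-verified Lean document; each statement's English description precedes it below -/
import Mathlib

section
/- Every nonsingular symmetric bilinear form (V, λ) over ℤ/2 on a finite-dimensional vector space admits a ℤ/4-valued quadratic enhancement, i.e. there exists a function q : V → ℤ/4 with q(x+y) = q(x) + q(y) + ι(λ(x,y)) for all x,y ∈ V. -/
/-!
In a basis `b` of `V`, lift the Gram matrix of `l` and the coordinates of vectors from `ℤ/2` to
`{0, 1} ⊆ ℤ/4`, and let `q x = ∑ i j, A i j * X i * X j`, where `A` and `X` are these lifts.
The lift is multiplicative but additive only up to even terms (`val_cast_add`). These even terms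
do not affect `q`: since `A` is symmetric, they occur twice and vanish modulo `4`. The cross terms
of `q (x + y)` pair up by the same symmetry into `2 * ∑ i j, A i j * X i * Y j`, which is
`iota (l x y)`.
-/

/-- The additive injection `ℤ/2 → ℤ/4` sending `1` to `2`. -/
def iota : ZMod 2 → ZMod 4 := fun a => 2 * (a.val : ZMod 4)

/-- The `{0, 1}`-valued lift `ℤ/2 → ℤ/4` is additive up to a carry. -/
lemma val_cast_add (a b : ZMod 2) :
    ((a + b).val : ZMod 4) = a.val + b.val + 2 * (a.val * b.val) := by
  revert a b; decide

lemma val_cast_mul (a b : ZMod 2) : ((a * b).val : ZMod 4) = a.val * b.val := by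
  revert a b; decide

lemma iota_add (a b : ZMod 2) : iota (a + b) = iota a + iota b := by
  revert a b; decide

lemma iota_sum {ι : Type*} (s : Finset ι) (f : ι → ZMod 2) :
    iota (∑ i ∈ s, f i) = ∑ i ∈ s, iota (f i) :=
  map_sum (AddMonoidHom.mk' iota iota_add) f s

/-- Every nonsingular symmetric bilinear form over `ℤ/2` admits a `ℤ/4`-valued
quadratic enhancement. -/
theorem exists_z4_enhancement
    {V : Type*} [AddCommGroup V] [Module (ZMod 2) V] [FiniteDimensional (ZMod 2) V]
    (l : V →ₗ[ZMod 2] V →ₗ[ZMod 2] ZMod 2)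
    (hsymm : ∀ x y : V, l x y = l y x)
    (hnonsing : Function.Bijective fun x : V => l x) :
    ∃ q : V → ZMod 4, ∀ x y : V, q (x + y) = q x + q y + iota (l x y) := by
  let b := Module.finBasis (ZMod 2) V
  let A : Fin _ → Fin _ → ZMod 4 := fun i j => ((l (b i) (b j)).val : ZMod 4)
  let X : V → Fin _ → ZMod 4 := fun x i => ((b.repr x i).val : ZMod 4)
  have hA : ∀ i j, A j i = A i j := fun i j => by simp only [A, hsymm (b j) (b i)]
  have hX : ∀ x y i, X (x + y) i = X x i + X y i + 2 * (X x i * X y i) := fun x y i => by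
    simp only [X, map_add, Finsupp.add_apply, val_cast_add]
  have hl : ∀ x y, iota (l x y) = ∑ i, ∑ j, 2 * (A i j * X x i * X y j) := fun x y => by
    have h : l x y = ∑ i, ∑ j, l (b i) (b j) * b.repr x i * b.repr y j := by
      conv_lhs => rw [← b.sum_repr x, ← b.sum_repr y]
      simp only [map_sum, map_smul, LinearMap.sum_apply, LinearMap.smul_apply, smul_eq_mul,
        Finset.mul_sum]
      rw [Finset.sum_comm]
      exact Finset.sum_congr rfl fun i _ => Finset.sum_congr rfl fun j _ => by ring
    simp only [h, iota_sum]
    simp only [iota, val_cast_mul, A, X]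
  have h4 : (4 : ZMod 4) = 0 := by decide
  refine ⟨fun x => ∑ i, ∑ j, A i j * X x i * X x j, fun x y => ?_⟩
  -- One representative of each pair of mixed terms exchanged by `i ↔ j`.
  let H : Fin _ → Fin _ → ZMod 4 := fun i j =>
    A i j * (X x i * X y j + 2 * (X x i + X y i) * (X x j * X y j))
  have hH : ∑ i, ∑ j, 2 * (A i j * X x i * X y j) = ∑ i, ∑ j, (H i j + H j i) := by
    have hswap : ∑ i, ∑ j, H j i = ∑ i, ∑ j, H i j := Finset.sum_comm
    simp only [Finset.sum_add_distrib]
    rw [hswap]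
    simp only [← Finset.sum_add_distrib]
    refine Finset.sum_congr rfl fun i _ => Finset.sum_congr rfl fun j _ => ?_
    simp only [H]
    linear_combination (-(A i j * (X x i + X y i) * (X x j * X y j))) * h4
  simp only [hl, hH, ← Finset.sum_add_distrib]
  refine Finset.sum_congr rfl fun i _ => Finset.sum_congr rfl fun j _ => ?_
  simp only [H, hX, hA i j]
  linear_combination (A i j * (X x i * X y i) * (X x j * X y j)) * h4
end

section
/- Let (V, λ, h) and (V', λ', h') be nonsingular symmetric bilinear forms over ℤ/2 with ℤ/2-valued quadratic enhancements, and suppose dim V = dim V'. Then there exists a ℤ/2-linear isomorphism e : V → V' with λ'(e x, e y) = λ(x,y) and h'(e x) = h(x) for all x, y ∈ V if and only if ∑_{x∈V} (−1)^{h(x)} = ∑_{x'∈V'} (−1)^{h'(x')} in ℤ, where (−1)^{h(x)} means (−1) raised to the representative (h x).val ∈ {0,1}. (Dimension and the Arf invariant are complete invariants of nonsingular ℤ/2-quadratic forms.) -/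
/-!
An enhancement `h` determines its form, `l x y = h (x + y) + h x + h y`, so `l` is symmetric and
alternating, and a linear isomorphism preserving `h` also preserves `l`. Isometric spaces clearly
have equal Gauss sums; the converse is by induction on the dimension.

If `V` has a nonzero singular vector `x` (one with `h x = 0`), nonsingularity gives `y` with
`l x y = 1`, and after replacing `y` by `x + y` if necessary also `h y = 0`. Then `V` is the
orthogonal sum of the hyperbolic plane spanned by `x, y` and its complement `W`
(`exists_hyperbolic_splitting`), and the Gauss sum of `V` is twice that of `W`
(`gaussSum_hyperbolic`). If both spaces have such a vector, the complements are isometric by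
induction.

Otherwise, the Gauss sum and the dimension together count the zeros of the enhancement, so if one
space has no nonzero singular vector then neither does the other (`anisotropic_of_gauss_sum_eq`).
In that case both enhancements are `1` at every nonzero vector, and every linear isomorphism is an
isometry.
-/

section Arf

universe u v

lemma zmod_two_eq_one_of_ne_zero {a : ZMod 2} (ha : a ≠ 0) : a = 1 := by
  revert a; decide

lemma enhancement_zero {V : Type*} [AddCommGroup V] [Module (ZMod 2) V]
    (l : V →ₗ[ZMod 2] V →ₗ[ZMod 2] ZMod 2)
    (h : V → ZMod 2) (hh : ∀ x y : V, h (x + y) = h x + h y + l x y) : h 0 = 0 := by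
  simpa using hh 0 0

lemma form_self {V : Type*} [AddCommGroup V] [Module (ZMod 2) V]
    (l : V →ₗ[ZMod 2] V →ₗ[ZMod 2] ZMod 2)
    (h : V → ZMod 2) (hh : ∀ x y : V, h (x + y) = h x + h y + l x y) (x : V) : l x x = 0 := by
  have h1 := hh x x
  have h2 : x + x = 0 := by
    rw [← two_smul (ZMod 2) x, show (2 : ZMod 2) = 0 from rfl, zero_smul]
  rw [h2, enhancement_zero l h hh, CharTwo.add_self_eq_zero, zero_add] at h1
  exact h1.symm

lemma form_symm {V : Type*} [AddCommGroup V] [Module (ZMod 2) V]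
    (l : V →ₗ[ZMod 2] V →ₗ[ZMod 2] ZMod 2)
    (h : V → ZMod 2) (hh : ∀ x y : V, h (x + y) = h x + h y + l x y) (x y : V) :
    l x y = l y x := by
  have h1 := hh x y
  rw [add_comm x y, hh y x, add_comm (h y)] at h1
  exact (add_left_cancel h1).symm

lemma enhancement_smul {V : Type*} [AddCommGroup V] [Module (ZMod 2) V]
    (l : V →ₗ[ZMod 2] V →ₗ[ZMod 2] ZMod 2)
    (h : V → ZMod 2) (hh : ∀ x y : V, h (x + y) = h x + h y + l x y) {x : V} (hx : h x = 0)
    (a : ZMod 2) : h (a • x) = 0 := by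
  by_cases ha : a = 0
  · rw [ha, zero_smul, enhancement_zero l h hh]
  · rw [zmod_two_eq_one_of_ne_zero ha, one_smul, hx]

/-- A nonzero singular vector splits off a hyperbolic plane, on which the enhancement is
`(a, b) ↦ a * b`, with nonsingular orthogonal complement. -/
lemma exists_hyperbolic_splitting {V : Type*} [AddCommGroup V] [Module (ZMod 2) V]
    (l : V →ₗ[ZMod 2] V →ₗ[ZMod 2] ZMod 2) (hns : ∀ x, (∀ y, l x y = 0) → x = 0)
    (h : V → ZMod 2) (hh : ∀ x y : V, h (x + y) = h x + h y + l x y)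
    {x : V} (hx0 : x ≠ 0) (hx : h x = 0) :
    ∃ (W : Submodule (ZMod 2) V) (e : (ZMod 2 × ZMod 2 × W) ≃ₗ[ZMod 2] V),
      (∀ p, h (e p) = p.1 * p.2.1 + h p.2.2) ∧
      (∀ w : W, (∀ w' : W, l w w' = 0) → w = 0) := by
  have hself := form_self l h hh
  have hsymm := form_symm l h hh
  obtain ⟨y, hxy, hy⟩ : ∃ y, l x y = 1 ∧ h y = 0 := by
    obtain ⟨y, hxy⟩ : ∃ y, l x y ≠ 0 := by
      by_contra! hc
      exact hx0 (hns x hc)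
    have hxy := zmod_two_eq_one_of_ne_zero hxy
    by_cases hy : h y = 0
    · exact ⟨y, hxy, hy⟩
    · refine ⟨x + y, by rw [map_add, hself, hxy, zero_add], ?_⟩
      rw [hh, hx, zmod_two_eq_one_of_ne_zero hy, hxy]; rfl
  have hyx : l y x = 1 := by rw [hsymm, hxy]
  let W : Submodule (ZMod 2) V := LinearMap.ker (l x) ⊓ LinearMap.ker (l y)
  have hWx : ∀ w : W, l x w = 0 := fun w => w.2.1
  have hWy : ∀ w : W, l y w = 0 := fun w => w.2.2
  let f : (ZMod 2 × ZMod 2 × W) →ₗ[ZMod 2] V :=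
    (LinearMap.toSpanSingleton (ZMod 2) V x).coprod
      ((LinearMap.toSpanSingleton (ZMod 2) V y).coprod W.subtype)
  have hf : ∀ a b w, f (a, b, w) = a • x + (b • y + (w : V)) := fun a b w => by simp [f]
  have hinj : Function.Injective f := by
    rw [← LinearMap.ker_eq_bot, LinearMap.ker_eq_bot']
    rintro ⟨a, b, w⟩ h0
    rw [hf] at h0
    have hb : b = 0 := by simpa [hself, hxy, hWx] using congrArg (l x) h0
    have ha : a = 0 := by simpa [hself, hyx, hWy] using congrArg (l y) h0
    subst ha hb
    simpa using h0
  have hsurj : Function.Surjective f := by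
    intro v
    refine ⟨(l y v, l x v, ⟨v - l y v • x - l x v • y, ?_, ?_⟩), ?_⟩
    · simp [hself, hxy]
    · simp [hself, hyx]
    · rw [hf]; module
  refine ⟨W, LinearEquiv.ofBijective f ⟨hinj, hsurj⟩, ?_, ?_⟩
  · rintro ⟨a, b, w⟩
    change h (f (a, b, w)) = a * b + h w
    simp [hf, hh, hxy, hWx, hWy, enhancement_smul l h hh hx, enhancement_smul l h hh hy]
    ring
  · intro w hw
    refine Subtype.ext (hns w fun v => ?_)
    obtain ⟨⟨a, b, w'⟩, rfl⟩ := hsurj v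
    simp [hf, hsymm w x, hsymm w y, hWx, hWy, hw]

lemma gaussSum_hyperbolic {V W : Type*} [Fintype V] [Fintype W]
    (h : V → ZMod 2) (g : W → ZMod 2) (e : (ZMod 2 × ZMod 2 × W) ≃ V)
    (he : ∀ p, h (e p) = p.1 * p.2.1 + g p.2.2) :
    ∑ x : V, (-1 : ℤ) ^ (h x).val = 2 * ∑ w : W, (-1 : ℤ) ^ (g w).val := by
  have hneg : ∀ a : ZMod 2, (-1 : ℤ) ^ (1 + a).val = -(-1) ^ a.val := by decide
  have huniv : (Finset.univ : Finset (ZMod 2)) = {0, 1} := by decide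
  rw [← Equiv.sum_comp e]
  simp only [he, Fintype.sum_prod_type, huniv]
  rw [Finset.sum_pair (by decide), Finset.sum_pair (by decide), Finset.sum_pair (by decide)]
  simp only [zero_mul, mul_zero, zero_add, one_mul, hneg, Finset.sum_neg_distrib]
  ring

/-- Among spaces of equal cardinality, having no nonzero singular vector is detected by the
Gauss sum. -/
lemma anisotropic_of_gauss_sum_eq {V V' : Type*} [AddCommGroup V] [AddCommGroup V']
    [Fintype V] [Fintype V'] (hcard : Fintype.card V = Fintype.card V')
    (h : V → ZMod 2) (h' : V' → ZMod 2) (h0 : h 0 = 0) (h0' : h' 0 = 0)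
    (hsum : (∑ x : V, (-1 : ℤ) ^ (h x).val) = ∑ x' : V', (-1 : ℤ) ^ (h' x').val)
    (haniso : ∀ x, x ≠ 0 → h x ≠ 0) : ∀ x', x' ≠ 0 → h' x' ≠ 0 := by
  classical
  intro x' hx' hx0
  -- `(-1) ^ h + 1` is twice the indicator function of the zeros of `h`.
  have h1 : ∑ x : V, ((-1 : ℤ) ^ (h x).val + 1) = 2 := by
    rw [Fintype.sum_eq_single 0]
    · simp [h0]
    · intro x hx
      rw [zmod_two_eq_one_of_ne_zero (haniso x hx)]
      rfl
  have h2 : ∑ x : V', ((-1 : ℤ) ^ (h' x).val + 1) = 2 := by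
    rw [← h1]
    simp [Finset.sum_add_distrib, hsum, hcard]
  have hnn : ∀ a : ZMod 2, 0 ≤ (-1 : ℤ) ^ a.val + 1 := by decide
  have h3 := Finset.sum_le_univ_sum_of_nonneg (s := {0, x'}) fun x => hnn (h' x)
  rw [Finset.sum_pair hx'.symm, h2, h0', hx0] at h3
  norm_num at h3

/-- Spaces of equal dimension with equal Gauss sums are isometric. -/
lemma exists_isometry_of_gauss_sum_eq (n : ℕ) :
    ∀ (V : Type u) (V' : Type v) [AddCommGroup V] [Module (ZMod 2) V] [Fintype V]
      [AddCommGroup V'] [Module (ZMod 2) V'] [Fintype V']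
      (l : V →ₗ[ZMod 2] V →ₗ[ZMod 2] ZMod 2) (_ : ∀ x, (∀ y, l x y = 0) → x = 0)
      (l' : V' →ₗ[ZMod 2] V' →ₗ[ZMod 2] ZMod 2) (_ : ∀ x, (∀ y, l' x y = 0) → x = 0)
      (h : V → ZMod 2) (_ : ∀ x y : V, h (x + y) = h x + h y + l x y)
      (h' : V' → ZMod 2) (_ : ∀ x y : V', h' (x + y) = h' x + h' y + l' x y)
      (_ : Module.finrank (ZMod 2) V = n) (_ : Module.finrank (ZMod 2) V' = n)
      (_ : (∑ x : V, (-1 : ℤ) ^ (h x).val) = ∑ x' : V', (-1 : ℤ) ^ (h' x').val),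
      ∃ e : V ≃ₗ[ZMod 2] V', ∀ x, h' (e x) = h x := by
  induction n using Nat.strong_induction_on with
  | _ n ih =>
  intro V V' _ _ _ _ _ _ l hns l' hns' h hh h' hh' hd hd' hsum
  have h0 := enhancement_zero l h hh
  have h0' := enhancement_zero l' h' hh'
  let e₀ : V ≃ₗ[ZMod 2] V' := LinearEquiv.ofFinrankEq V V' (hd.trans hd'.symm)
  have hcard : Fintype.card V = Fintype.card V' := Fintype.card_congr e₀.toEquiv
  by_cases haniso : ∀ x, x ≠ 0 → h x ≠ 0
  · have haniso' := anisotropic_of_gauss_sum_eq hcard h h' h0 h0' hsum haniso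
    refine ⟨e₀, fun x => ?_⟩
    by_cases hx : x = 0
    · rw [hx, map_zero, h0, h0']
    · rw [zmod_two_eq_one_of_ne_zero (haniso x hx),
        zmod_two_eq_one_of_ne_zero (haniso' _ (e₀.map_ne_zero_iff.mpr hx))]
  · have haniso' : ¬ ∀ x', x' ≠ 0 → h' x' ≠ 0 := fun hc =>
      haniso (anisotropic_of_gauss_sum_eq hcard.symm h' h h0' h0 hsum.symm hc)
    push Not at haniso haniso'
    obtain ⟨x, hx, hx0⟩ := haniso
    obtain ⟨x', hx', hx0'⟩ := haniso'
    obtain ⟨W, e, he, hW⟩ := exists_hyperbolic_splitting l hns h hh hx hx0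
    obtain ⟨W', e', he', hW'⟩ := exists_hyperbolic_splitting l' hns' h' hh' hx' hx0'
    let _ : Fintype W := Fintype.ofFinite W
    let _ : Fintype W' := Fintype.ofFinite W'
    have hr : 1 + (1 + Module.finrank (ZMod 2) W) = n := by
      rw [← hd, ← e.finrank_eq]; simp
    have hr' : 1 + (1 + Module.finrank (ZMod 2) W') = n := by
      rw [← hd', ← e'.finrank_eq]; simp
    have hs := gaussSum_hyperbolic h (fun w : W => h w) e.toEquiv he
    have hs' := gaussSum_hyperbolic h' (fun w : W' => h' w) e'.toEquiv he'
    obtain ⟨g, hg⟩ := ih (Module.finrank (ZMod 2) W) (by omega) W W'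
      (l.domRestrict₁₂ W W) (fun w hw => hW w hw)
      (l'.domRestrict₁₂ W' W') (fun w hw => hW' w hw)
      (fun w => h w) (fun a b => hh a b) (fun w => h' w) (fun a b => hh' a b)
      rfl (by omega) (by omega)
    let k : (ZMod 2 × ZMod 2 × W) ≃ₗ[ZMod 2] (ZMod 2 × ZMod 2 × W') :=
      (LinearEquiv.refl _ _).prodCongr ((LinearEquiv.refl _ _).prodCongr g)
    refine ⟨(e.symm.trans k).trans e', fun v => ?_⟩
    obtain ⟨⟨a, b, w⟩, rfl⟩ := e.surjective v
    simp [k, he, he', hg]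

end Arf

/-- Dimension and the Arf invariant (encoded via the real Gauss sum
`∑_{x} (−1)^{h(x)}`) are complete invariants of nonsingular `ℤ/2`-quadratic forms. -/
theorem isometric_iff_gauss_sum_eq
    {V V' : Type*} [AddCommGroup V] [Module (ZMod 2) V] [FiniteDimensional (ZMod 2) V]
    [Fintype V]
    [AddCommGroup V'] [Module (ZMod 2) V'] [FiniteDimensional (ZMod 2) V']
    [Fintype V']
    (l : V →ₗ[ZMod 2] V →ₗ[ZMod 2] ZMod 2)
    (hsymm : ∀ x y : V, l x y = l y x)
    (hnonsing : Function.Bijective fun x : V => l x)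
    (l' : V' →ₗ[ZMod 2] V' →ₗ[ZMod 2] ZMod 2)
    (hsymm' : ∀ x y : V', l' x y = l' y x)
    (hnonsing' : Function.Bijective fun x : V' => l' x)
    (h : V → ZMod 2) (hh : ∀ x y : V, h (x + y) = h x + h y + l x y)
    (h' : V' → ZMod 2) (hh' : ∀ x y : V', h' (x + y) = h' x + h' y + l' x y)
    (hdim : Module.finrank (ZMod 2) V = Module.finrank (ZMod 2) V') :
    (∃ e : V ≃ₗ[ZMod 2] V',
        (∀ x y : V, l' (e x) (e y) = l x y) ∧ (∀ x : V, h' (e x) = h x)) ↔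
      (∑ x : V, (-1 : ℤ) ^ (h x).val) = ∑ x' : V', (-1 : ℤ) ^ (h' x').val := by
  constructor
  · rintro ⟨e, -, he⟩
    exact Fintype.sum_equiv e.toEquiv _ _ fun x => by simp [he]
  · intro hsum
    have hns : ∀ x, (∀ y, l x y = 0) → x = 0 := fun x hx =>
      hnonsing.1 (LinearMap.ext fun y => by simp [hx y])
    have hns' : ∀ x, (∀ y, l' x y = 0) → x = 0 := fun x hx =>
      hnonsing'.1 (LinearMap.ext fun y => by simp [hx y])
    obtain ⟨e, he⟩ := exists_isometry_of_gauss_sum_eq _ V V' l hns l' hns' h hh h' hh'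
      rfl hdim.symm hsum
    refine ⟨e, fun x y => ?_, he⟩
    have h1 := hh' (e x) (e y)
    rw [← map_add, he, he, he, hh] at h1
    exact (add_left_cancel h1).symm
end

section
/- Let (V, λ) be a nonsingular symmetric bilinear form over ℤ/2 with dim V = n, and let q be a ℤ/4-valued quadratic enhancement of λ. Then there exists k ∈ ℤ/8 such that ∑_{x∈V} i^{q(x)} = (√2)ⁿ · exp(2πi·k.val/8). In particular the Gauss sum of q has absolute value (√2)ⁿ and its argument is an integer multiple of π/4; this k is the Brown–Kervaire invariant BK(V,λ,q) ∈ ℤ/8. -/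
open Complex in
lemma I_pow_val_add (a b : ZMod 4) :
    I ^ (a + b).val = I ^ a.val * I ^ b.val := by
  rw [ZMod.val_add, ← pow_add, ← pow_eq_pow_mod _ I_pow_four]

open Complex in
lemma conj_I_pow_mul (m : ℕ) : (starRingEnd ℂ) (I ^ m) * I ^ m = 1 := by
  rw [map_pow, ← mul_pow]
  simp

/-- `a ↦ i ^ ι(a)` is the nontrivial character of `ℤ/2`. -/
lemma I_pow_iota_add_one (a : ZMod 2) :
    Complex.I ^ (iota (a + 1)).val = -Complex.I ^ (iota a).val := by
  have h1 : (iota 0).val = 0 := by decide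
  have h2 : (iota 1).val = 2 := by decide
  have h3 : (1 + 1 : ZMod 2) = 0 := by decide
  obtain rfl | rfl : a = 0 ∨ a = 1 := by revert a; decide
  · simp [h1, h2]
  · simp [h1, h2, h3]

/-- Nonsingularity makes the character `y ↦ (-1) ^ l y z` nontrivial for `z ≠ 0`, so its sum
vanishes. -/
lemma sum_I_pow_iota {V : Type*} [AddCommGroup V] [Module (ZMod 2) V] [Fintype V]
    (l : V →ₗ[ZMod 2] V →ₗ[ZMod 2] ZMod 2)
    (hsymm : ∀ x y : V, l x y = l y x)
    (hnonsing : Function.Bijective fun x : V => l x) (z : V) (hz : z ≠ 0) :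
    ∑ y : V, Complex.I ^ (iota (l y z)).val = 0 := by
  obtain ⟨w, hw⟩ : ∃ w, l w z = 1 := by
    by_contra! h
    refine hz (hnonsing.1 (LinearMap.ext fun w => ?_))
    have h2 : ∀ a : ZMod 2, a ≠ 1 → a = 0 := by decide
    simpa [hsymm z w] using h2 _ (h w)
  -- Translating by `w` changes the sign of every term.
  have key : ∑ y : V, Complex.I ^ (iota (l y z)).val
      = -∑ y : V, Complex.I ^ (iota (l y z)).val := by
    rw [← Finset.sum_neg_distrib, ← Equiv.sum_comp (Equiv.addRight w)]
    refine Finset.sum_congr rfl fun y _ => ?_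
    simp only [Equiv.coe_addRight, map_add, LinearMap.add_apply, hw, I_pow_iota_add_one]
  exact self_eq_neg.mp key

lemma conj_mul_gauss_sum {V : Type*} [AddCommGroup V] [Module (ZMod 2) V] [Fintype V]
    (l : V →ₗ[ZMod 2] V →ₗ[ZMod 2] ZMod 2)
    (hsymm : ∀ x y : V, l x y = l y x)
    (hnonsing : Function.Bijective fun x : V => l x)
    (q : V → ZMod 4)
    (hq : ∀ x y : V, q (x + y) = q x + q y + iota (l x y)) :
    (starRingEnd ℂ) (∑ x : V, Complex.I ^ (q x).val) * ∑ x : V, Complex.I ^ (q x).val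
      = Fintype.card V := by
  classical
  have i0 : iota 0 = 0 := by decide
  have hq0 : q 0 = 0 := by simpa [i0] using hq 0 0
  have hterm (y z : V) : (starRingEnd ℂ) (Complex.I ^ (q y).val) * Complex.I ^ (q (y + z)).val
      = Complex.I ^ (q z).val * Complex.I ^ (iota (l y z)).val := by
    rw [hq, I_pow_val_add, I_pow_val_add, ← mul_assoc, ← mul_assoc, conj_I_pow_mul, one_mul]
  calc
    _ = ∑ y : V, ∑ z : V,
          (starRingEnd ℂ) (Complex.I ^ (q y).val) * Complex.I ^ (q (y + z)).val := by
      rw [map_sum, Finset.sum_mul]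
      refine Finset.sum_congr rfl fun y _ => ?_
      rw [Finset.mul_sum, ← Equiv.sum_comp (Equiv.addLeft y)]
      rfl
    _ = ∑ z : V, Complex.I ^ (q z).val * ∑ y : V, Complex.I ^ (iota (l y z)).val := by
      rw [Finset.sum_comm]
      simp only [hterm, Finset.mul_sum]
    _ = Fintype.card V := by
      rw [Finset.sum_eq_single 0]
      · simp [hq0, i0]
      · intro z _ hz
        rw [sum_I_pow_iota l hsymm hnonsing z hz, mul_zero]
      · simp

/-- The primitive eighth root of unity `exp(2πi/8)`, in Cartesian form `(1 + i)/√2`. -/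
noncomputable def zeta : ℂ := (1 + Complex.I) / ((Real.sqrt 2 : ℝ) : ℂ)

lemma sqrt_two_ne_zero : ((Real.sqrt 2 : ℝ) : ℂ) ≠ 0 := by
  simp

lemma sqrt_two_mul_zeta : ((Real.sqrt 2 : ℝ) : ℂ) * zeta = 1 + Complex.I :=
  mul_div_cancel₀ _ sqrt_two_ne_zero

lemma sqrt_two_sq : ((Real.sqrt 2 : ℝ) : ℂ) ^ 2 = 2 := by
  rw [← Complex.ofReal_pow, Real.sq_sqrt (by norm_num)]
  simp

lemma zeta_sq : zeta ^ 2 = Complex.I := by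
  rw [zeta, div_pow, sqrt_two_sq]
  linear_combination Complex.I_sq / 2

lemma zeta_pow_eight : zeta ^ 8 = 1 := by
  rw [show 8 = 2 * 4 from rfl, pow_mul, zeta_sq, Complex.I_pow_four]

lemma zeta_eq_exp : zeta = Complex.exp (2 * (Real.pi : ℂ) * Complex.I / 8) := by
  have h : 2 * (Real.pi : ℂ) * Complex.I / 8 = ((Real.pi / 4 : ℝ) : ℂ) * Complex.I := by
    push_cast; ring
  rw [h, Complex.exp_mul_I, ← Complex.ofReal_cos, ← Complex.ofReal_sin, Real.cos_pi_div_four,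
    Real.sin_pi_div_four, zeta, div_eq_iff sqrt_two_ne_zero]
  push_cast
  linear_combination (-(1 + Complex.I) / 2) * sqrt_two_sq

/-- A Gaussian integer of norm `2ⁿ` is `(√2)ⁿ` times an eighth root of unity: `1 + i` can be
divided out as long as the norm is even. -/
lemma exists_zeta_pow_of_norm (n : ℕ) : ∀ a b : ℤ, a ^ 2 + b ^ 2 = 2 ^ n →
    ∃ m : ℕ, (a : ℂ) + b * Complex.I = ((Real.sqrt 2 : ℝ) : ℂ) ^ n * zeta ^ m := by
  induction n with
  | zero =>
    intro a b h
    have ha : a ≤ 1 := by nlinarith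
    have ha' : -1 ≤ a := by nlinarith
    have hb : b ≤ 1 := by nlinarith
    have hb' : -1 ≤ b := by nlinarith
    have h4 : zeta ^ 4 = -1 := by
      rw [show 4 = 2 * 2 from rfl, pow_mul, zeta_sq, Complex.I_sq]
    have h6 : zeta ^ 6 = -Complex.I := by
      rw [show 6 = 2 * 3 from rfl, pow_mul, zeta_sq, Complex.I_pow_three]
    interval_cases a <;> interval_cases b <;> norm_num at h
    · exact ⟨4, by simp [h4]⟩
    · exact ⟨6, by simp [h6]⟩
    · exact ⟨2, by simp [zeta_sq]⟩
    · exact ⟨0, by simp⟩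
  | succ n ih =>
    intro a b h
    have hpar : (a + b) % 2 = 0 := by
      have h2 : Even (a ^ 2 + b ^ 2) := by
        rw [h, pow_succ]
        exact even_two.mul_left _
      have : Even (a + b) := by
        simpa [Int.even_add, Int.even_pow] using h2
      exact Int.even_iff.mp this
    obtain ⟨c, hc⟩ : ∃ c, a + b = 2 * c := ⟨(a + b) / 2, by omega⟩
    -- `a + b i = (1 + i)(c + d i)` with `c = (a + b) / 2` and `d = (b - a) / 2 = c - a`.
    obtain ⟨m, hm⟩ := ih c (c - a) (by
      obtain rfl : b = 2 * c - a := by omega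
      rw [pow_succ 2 n] at h
      linarith)
    refine ⟨m + 1, ?_⟩
    obtain rfl : b = 2 * c - a := by omega
    rw [pow_succ, pow_succ, mul_mul_mul_comm, ← hm, sqrt_two_mul_zeta]
    push_cast
    linear_combination ((a : ℂ) - c) * Complex.I_sq

/-- The Gauss sum of a `ℤ/4`-valued quadratic enhancement of a nonsingular symmetric
bilinear form over `ℤ/2` on an `n`-dimensional space has absolute value `(√2)ⁿ` and
argument an integer multiple of `π/4`: it equals `(√2)ⁿ · exp(2πi·k/8)` for some
`k ∈ ℤ/8`, the Brown–Kervaire invariant. -/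
theorem gauss_sum_eq_brown_kervaire
    {V : Type*} [AddCommGroup V] [Module (ZMod 2) V] [FiniteDimensional (ZMod 2) V]
    [Fintype V]
    (n : ℕ) (hdim : Module.finrank (ZMod 2) V = n)
    (l : V →ₗ[ZMod 2] V →ₗ[ZMod 2] ZMod 2)
    (hsymm : ∀ x y : V, l x y = l y x)
    (hnonsing : Function.Bijective fun x : V => l x)
    (q : V → ZMod 4)
    (hq : ∀ x y : V, q (x + y) = q x + q y + iota (l x y)) :
    ∃ k : ZMod 8,
      ∑ x : V, Complex.I ^ (q x).val =
        ((Real.sqrt 2 : ℝ) : ℂ) ^ n *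
          Complex.exp (2 * (Real.pi : ℂ) * Complex.I * (k.val : ℂ) / 8) := by
  subst hdim
  set S := ∑ x : V, Complex.I ^ (q x).val with hS
  obtain ⟨a, b, hab⟩ : ∃ a b : ℤ, S = a + b * Complex.I := by
    refine ⟨(∑ x : V, (⟨0, 1⟩ : GaussianInt) ^ (q x).val).re,
      (∑ x : V, (⟨0, 1⟩ : GaussianInt) ^ (q x).val).im, ?_⟩
    rw [← GaussianInt.toComplex_def, map_sum, hS]
    simp [GaussianInt.toComplex_def']
  have hnorm : a ^ 2 + b ^ 2 = 2 ^ Module.finrank (ZMod 2) V := by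
    have h := conj_mul_gauss_sum l hsymm hnonsing q hq
    rw [← hS, hab, Module.card_eq_pow_finrank (K := ZMod 2), ZMod.card] at h
    have h' : (a : ℂ) ^ 2 + (b : ℂ) ^ 2 = 2 ^ Module.finrank (ZMod 2) V := by
      simp only [map_add, map_mul, Complex.conj_I, map_intCast] at h
      push_cast at h
      linear_combination h + (b : ℂ) ^ 2 * Complex.I_sq
    exact_mod_cast h'
  obtain ⟨m, hm⟩ := exists_zeta_pow_of_norm _ a b hnorm
  refine ⟨(m : ZMod 8), ?_⟩
  rw [hab, hm, pow_eq_pow_mod m zeta_pow_eight, ZMod.val_natCast, zeta_eq_exp,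
    ← Complex.exp_nat_mul]
  congr 2
  ring
end

section
/- Let K be a field, H a K-vector space, and φ : H → H → K a bilinear form with φ(x,x) = 0 for all x ∈ H (alternating). Let f and g be linear automorphisms of H preserving φ, i.e. φ(f x, f y) = φ(x,y) and φ(g x, g y) = φ(x,y) for all x, y, and suppose j : H → H is a linear map which is a two-sided inverse of 1 − f, i.e. j ∘ (1 − f) = id and (1 − f) ∘ j = id. Then the bilinear form S(z, z') := φ(j((g − f)(z)), (1 − g)(z')) is symmetric: S(z, z') = S(z', z) for all z, z' ∈ H. -/
/-!
Writing `w = (1 - g)z` and `w' = (1 - g)z'`, the identity `g - f = (1 - f) - (1 - g)` gives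
`S(z, z') = φ(z, w') - φ(j w, w')`. By `isometry_skew_part`, the skew-symmetrizations of both
terms equal `φ(w, w')`, because `w = (1 - g)z = (1 - f)(j w)` and likewise for `w'`; hence the
skew-symmetrization of `S` vanishes.
-/

/-- For an isometry `h` of an alternating form `φ`, the skew-symmetrization of `φ(x, (1 - h)y)`
is `φ((1 - h)x, (1 - h)y)`; in particular it depends on `x` and `y` only through their images
under `1 - h`. -/
lemma isometry_skew_part {K : Type*} [Field K] {H : Type*} [AddCommGroup H] [Module K H]
    (φ : H →ₗ[K] H →ₗ[K] K) (halt : ∀ x : H, φ x x = 0) (h : H →ₗ[K] H)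
    (hφ : ∀ x y : H, φ (h x) (h y) = φ x y) (x y : H) :
    φ x (y - h y) - φ y (x - h x) = φ (x - h x) (y - h y) := by
  have hskew : ∀ u v : H, φ u v = -φ v u := fun u v =>
    (LinearMap.IsAlt.neg (B := φ) halt v u).symm
  simp only [map_sub, LinearMap.sub_apply, hφ]
  rw [hskew y x, hskew y (h x)]
  ring

/-- Symmetry of the form appearing in Wall's non-additivity invariant: for symplectic
automorphisms `f`, `g` of an alternating form `(H, φ)` and `j` a two-sided inverse of
`1 − f`, the bilinear form `S(z, z') = φ(j((g − f)z), (1 − g)z')` is symmetric. -/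
theorem wall_nonadditivity_form_symmetric
    {K : Type*} [Field K] {H : Type*} [AddCommGroup H] [Module K H]
    (φ : H →ₗ[K] H →ₗ[K] K)
    (halt : ∀ x : H, φ x x = 0)
    (f g : H →ₗ[K] H)
    (hf : Function.Bijective f) (hg : Function.Bijective g)
    (hfφ : ∀ x y : H, φ (f x) (f y) = φ x y)
    (hgφ : ∀ x y : H, φ (g x) (g y) = φ x y)
    (j : H →ₗ[K] H)
    (hj1 : ∀ x : H, j (x - f x) = x)
    (hj2 : ∀ x : H, j x - f (j x) = x) :
    ∀ z z' : H, φ (j (g z - f z)) (z' - g z') = φ (j (g z' - f z')) (z - g z) := by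
  -- `g - f = (1 - f) - (1 - g)`, and `j` cancels `1 - f`.
  have hsplit : ∀ x : H, j (g x - f x) = x - j (x - g x) := fun x => by
    have hdiff : g x - f x = (x - f x) - (x - g x) := by abel
    rw [hdiff, map_sub, hj1]
  intro z z'
  have hskew_g := isometry_skew_part φ halt g hgφ z z'
  have hskew_f := isometry_skew_part φ halt f hfφ (j (z - g z)) (j (z' - g z'))
  simp only [hj2] at hskew_f
  rw [hsplit, hsplit, map_sub φ, map_sub φ, LinearMap.sub_apply, LinearMap.sub_apply]
  linear_combination hskew_g - hskew_f
end

section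
/- Let B and F be ℤ-modules, φ_B : B → B → ℤ and φ_F : F → F → ℤ symmetric bilinear forms, and v_B ∈ B, v_F ∈ F characteristic elements, i.e. φ_B(x,x) ≡ φ_B(x, v_B) (mod 2) for all x ∈ B and φ_F(y,y) ≡ φ_F(y, v_F) (mod 2) for all y ∈ F. Let φ = φ_B ⊗ φ_F be the induced symmetric bilinear form on the tensor product B ⊗ℤ F, determined by φ(x ⊗ y, x' ⊗ y') = φ_B(x,x') · φ_F(y,y'). Then v_B ⊗ v_F is a characteristic element of φ: φ(a, a) ≡ φ(a, v_B ⊗ v_F) (mod 2) for every a ∈ B ⊗ℤ F. -/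
/-!
Modulo 2 the square `a ↦ φ(a, a)` of a symmetric form is additive, since the cross terms
contribute `2 φ(a, b)`; so it suffices to compare it with `φ(·, vB ⊗ vF)` on pure tensors.
There both sides factor, and the congruences for `φB` and `φF` multiply.
-/

open TensorProduct

/-- The tensor product of characteristic elements is a characteristic element of the
tensor product form: if `φB(x,x) ≡ φB(x,vB) (mod 2)` and `φF(y,y) ≡ φF(y,vF) (mod 2)`,
then `φ(a,a) ≡ φ(a, vB ⊗ vF) (mod 2)` for every `a ∈ B ⊗ℤ F`, where `φ` is the bilinear
form determined by `φ(x ⊗ y, x' ⊗ y') = φB(x,x')·φF(y,y')`. -/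
theorem tensor_characteristic_element
    {B F : Type*} [AddCommGroup B] [AddCommGroup F]
    (φB : B →ₗ[ℤ] B →ₗ[ℤ] ℤ) (φF : F →ₗ[ℤ] F →ₗ[ℤ] ℤ)
    (hsB : ∀ x y : B, φB x y = φB y x)
    (hsF : ∀ x y : F, φF x y = φF y x)
    (vB : B) (vF : F)
    (hvB : ∀ x : B, (2 : ℤ) ∣ (φB x x - φB x vB))
    (hvF : ∀ y : F, (2 : ℤ) ∣ (φF y y - φF y vF))
    (φ : B ⊗[ℤ] F →ₗ[ℤ] B ⊗[ℤ] F →ₗ[ℤ] ℤ)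
    (hφ : ∀ (x x' : B) (y y' : F),
      φ (x ⊗ₜ[ℤ] y) (x' ⊗ₜ[ℤ] y') = φB x x' * φF y y') :
    ∀ a : B ⊗[ℤ] F, (2 : ℤ) ∣ (φ a a - φ a (vB ⊗ₜ[ℤ] vF)) := by
  have hsymm : ∀ a b, φ a b = φ b a := by
    intro a b
    induction a with
    | zero => simp
    | add a₁ a₂ h₁ h₂ => simp [h₁, h₂]
    | tmul x y =>
      induction b with
      | zero => simp
      | add b₁ b₂ h₁ h₂ => simp [h₁, h₂]
      | tmul x' y' => rw [hφ, hφ, hsB, hsF]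
  intro a
  induction a with
  | zero => simp
  | tmul x y =>
    rw [hφ, hφ]
    exact ((Int.modEq_iff_dvd.mpr (hvB x)).mul (Int.modEq_iff_dvd.mpr (hvF y))).dvd
  | add a b ha hb =>
    simp only [map_add, LinearMap.add_apply, hsymm b a]
    lia
end

section
/- Let n be a natural number, A a symmetric n×n matrix over ℤ with det A ∈ {1, −1} (a unimodular symmetric bilinear form on ℤⁿ), and v ∈ ℤⁿ a characteristic vector, i.e. xᵀAx ≡ xᵀAv (mod 2) for all x ∈ ℤⁿ. Let σ(A) ∈ ℤ be the signature of A, i.e. the number of positive eigenvalues minus the number of negative eigenvalues of the real symmetric matrix obtained by mapping the entries of A into ℝ. Then σ(A) ≡ vᵀAv (mod 8). (van der Blij's theorem: the signature mod 8 of a nonsingular symmetric form over ℤ equals the square of any characteristic element.) -/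
/-!
The proof compares two evaluations of one Gauss sum (Milgram's argument).

Over `ℚ` the form can be diagonalised, so there is a nonsingular integral `P` with
`Pᵀ A P = diag (2dᵢ)` (`exists_int_diagonalization`). Put `N = 4 ∏ |dᵢ|`, `cᵢ = N / (4dᵢ)` and
`S = ∑ exp (2πi (∑ cᵢ yᵢ²) / N)`, the sum over `y ∈ (ℤ/N)ⁿ`. This is a multiple of the Gauss sum of the
discriminant form of the finite-index sublattice `P ℤⁿ`.

* `S` is a product of one-dimensional Gauss sums. By the theta functional equation (`gauss_sum_mul`,
  `gauss_sum_zmod`) the `i`-th factor is a positive multiple of `exp (πi sign dᵢ / 4)`, and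
  `∑ sign dᵢ` is the signature by Sylvester's law (`intSignature_eq_sum_sign`). Hence `S` is a positive
  multiple of `exp (πi σ(A) / 4)`.
* Since `A` is unimodular, `ℤⁿ` gives a self-dual subgroup of the discriminant group. Averaging `S` over
  its translates leaves only terms equal to `exp (πi vᵀAv / 4)` (`self_dual_sum`), so `S` is a
  nonnegative multiple of `exp (πi vᵀAv / 4)`.

As `S ≠ 0`, the two phases agree, which is the congruence modulo `8`.
-/

open Matrix

/-- A symmetric integer matrix maps to a Hermitian real matrix. -/
theorem isHermitian_map_real {n : ℕ} {A : Matrix (Fin n) (Fin n) ℤ} (hA : A.IsSymm) :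
    (A.map ((↑) : ℤ → ℝ)).IsHermitian := by
  ext i j
  have h2 : A j i = A i j := by
    have := congrFun (congrFun hA i) j
    simpa [Matrix.transpose_apply] using this
  simp [Matrix.conjTranspose_apply, Matrix.map_apply, h2]

/-- The signature of a symmetric integer matrix: the number of positive eigenvalues
minus the number of negative eigenvalues of the associated real symmetric matrix. -/
noncomputable def intSignature {n : ℕ} (A : Matrix (Fin n) (Fin n) ℤ) (hA : A.IsSymm) : ℤ := by
  classical
  exact
    ((Finset.univ.filter fun i => 0 < (isHermitian_map_real hA).eigenvalues i).card : ℤ) -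
      ((Finset.univ.filter fun i => (isHermitian_map_real hA).eigenvalues i < 0).card : ℤ)

/-! ### The sign of the quadratic Gauss sum -/

/-- Complex powers are multiplicative when the first factor is a positive real. -/
lemma ofReal_mul_cpow {r : ℝ} (hr : 0 < r) {z : ℂ} (hz : z ≠ 0) (w : ℂ) :
    ((r : ℂ) * z) ^ w = (r : ℂ) ^ w * z ^ w := by
  have hr' : (r : ℂ) ≠ 0 := by exact_mod_cast hr.ne'
  rw [Complex.cpow_def_of_ne_zero (mul_ne_zero hr' hz), Complex.cpow_def_of_ne_zero hr',
    Complex.cpow_def_of_ne_zero hz, Complex.log_ofReal_mul hr hz, ← Complex.exp_add,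
    Complex.ofReal_log hr.le, add_mul]

open Filter Topology Complex HurwitzZeta in
lemma tendsto_cosKernel (a : UnitAddCircle) : Tendsto (cosKernel a) atTop (𝓝 1) := by
  obtain ⟨p, hp, h⟩ := isBigO_atTop_cosKernel_sub a
  have h2 : Tendsto (fun x : ℝ ↦ Real.exp (-p * x)) atTop (𝓝 0) := by
    refine Real.tendsto_exp_atBot.comp ?_
    exact tendsto_id.const_mul_atTop_of_neg (by linarith)
  have h3 := (h.trans_tendsto h2).add_const 1
  simpa using h3

open Filter Topology Complex HurwitzZeta in
/-- Splitting the theta series at `τ = 1 / (2a) + i / (4a²t)` into residue classes mod `2a`: on the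
class of `r` the phase `exp (πi n² / (2a))` is constant, and the remaining real Gaussian sum over the
class is turned into `√t · cosKernel (r / (2a)) t` by the functional equation of the even kernel. -/
lemma jacobiTheta_split {a : ℕ} (ha : 0 < a) {t : ℝ} (ht : 0 < t) :
    jacobiTheta (1 / (2 * a) + I / (4 * a ^ 2 * t)) = (t : ℂ) ^ (1 / 2 : ℂ) *
      ∑ r ∈ Finset.range (2 * a), cexp (Real.pi * I * r ^ 2 / (2 * a)) *
        (cosKernel ((r / (2 * a) : ℝ) : UnitAddCircle) t : ℂ) := by
  have ha' : (a : ℂ) ≠ 0 := by exact_mod_cast ha.ne'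
  have haR : (0 : ℝ) < a := by exact_mod_cast ha
  have ht' : (t : ℂ) ≠ 0 := by exact_mod_cast ht.ne'
  have : NeZero (2 * a) := ⟨by omega⟩
  set τ : ℂ := 1 / (2 * a) + I / (4 * a ^ 2 * t) with hτ
  have him : 0 < τ.im := by
    have : τ = ((1 / (2 * a) : ℝ) : ℂ) + ((1 / (4 * a ^ 2 * t) : ℝ) : ℂ) * I := by
      rw [hτ]; push_cast; ring
    rw [this]
    simp only [add_im, ofReal_im, mul_im, ofReal_re, I_im, I_re]
    have : 0 < 1 / (4 * (a:ℝ) ^ 2 * t) := by positivity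
    linarith
  have hs : Summable (fun n : ℤ ↦ cexp (Real.pi * I * (n : ℂ) ^ 2 * τ)) := by
    have := (hasSum_jacobiTheta₂_term 0 him).summable
    refine this.congr fun n ↦ ?_
    simp [jacobiTheta₂_term]
  let e := ((Equiv.prodComm _ _).trans (Int.divModEquiv (2 * a)).symm : Fin (2 * a) × ℤ ≃ ℤ)
  have hs' := e.summable_iff.2 hs
  have hterm (r : Fin (2 * a)) (m : ℤ) :
      cexp (Real.pi * I * ((e (r, m) : ℤ) : ℂ) ^ 2 * τ) =
        cexp (Real.pi * I * ((r : ℕ) : ℂ) ^ 2 / (2 * a)) *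
          (Real.exp (-Real.pi * (m + (((r : ℕ) : ℝ) / (2 * a))) ^ 2 * (1 / t)) : ℂ) := by
    have he : e (r, m) = m * (2 * a : ℕ) + ((r : ℕ) : ℤ) := rfl
    rw [he, ofReal_exp, ← Complex.exp_add]
    rw [Complex.exp_eq_exp_iff_exists_int]
    refine ⟨m ^ 2 * a + m * r, ?_⟩
    rw [hτ]
    push_cast
    field_simp
    ring_nf
    simp only [I_sq]
    ring
  rw [jacobiTheta, ← e.tsum_eq]
  refine (hs'.tsum_prod).trans ?_
  rw [tsum_fintype, Finset.mul_sum,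
    ← Fin.sum_univ_eq_sum_range (fun r : ℕ ↦ (t : ℂ) ^ (1 / 2 : ℂ) *
      (cexp (Real.pi * I * r ^ 2 / (2 * a)) *
        (cosKernel ((r / (2 * a) : ℝ) : UnitAddCircle) t : ℂ)))]
  refine Finset.sum_congr rfl fun r _ ↦ ?_
  simp only [Function.comp_def, hterm]
  rw [tsum_mul_left, ← ofReal_tsum,
    (hasSum_int_evenKernel (((r : ℕ) : ℝ) / (2 * a)) (one_div_pos.2 ht)).tsum_eq,
    evenKernel_functional_equation]
  rw [one_div_one_div, Real.div_rpow zero_le_one ht.le, Real.one_rpow, one_div_one_div]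
  rw [ofReal_mul, ofReal_cpow ht.le]
  push_cast
  ring

open Filter Topology Complex HurwitzZeta in
/-- Evaluation of the quadratic Gauss sum, including its sign: it is the inverse of the principal
square root of `-i / (2a)`. With `s = -1 / (2a) + i t` and `τ = 1 / (2a) + i / (4a²t)` one has
`-1 / s = 2a - 1 / τ`, so two applications of the theta functional equation and the period `2` express
`θ(s)` through `θ(τ)`, which `jacobiTheta_split` writes as a Gauss sum weighted by kernels tending
to `1`. The identity is the limit `t → ∞`, where also `θ(s) → 1`. -/
lemma gauss_sum_mul {a : ℕ} (ha : 0 < a) :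
    (-I * (1 / (2 * a))) ^ (1 / 2 : ℂ) *
      ∑ r ∈ Finset.range (2 * a), cexp (Real.pi * I * r ^ 2 / (2 * a)) = 1 := by
  have ha' : (a : ℂ) ≠ 0 := by exact_mod_cast ha.ne'
  have haR : (0 : ℝ) < a := by exact_mod_cast ha
  have hinv : Tendsto (fun t : ℝ ↦ ((t⁻¹ : ℝ) : ℂ)) atTop (𝓝 0) := by
    have := (continuous_ofReal.tendsto 0).comp tendsto_inv_atTop_zero
    rw [ofReal_zero] at this
    exact this
  have hL : Tendsto (fun t : ℝ ↦ jacobiTheta (-1 / (2 * a) + I * t)) atTop (𝓝 1) := by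
    have h1 : Tendsto (fun t : ℝ ↦ (-1 / (2 * a) + I * t : ℂ)) atTop (comap im atTop) := by
      rw [tendsto_comap_iff]
      have : (im ∘ fun t : ℝ ↦ (-1 / (2 * a) + I * t : ℂ)) = id := by
        ext t
        have : (-1 / (2 * a) : ℂ) = ((-1 / (2 * a) : ℝ) : ℂ) := by push_cast; ring
        simp only [Function.comp, this, add_im, ofReal_im]
        simp
      rw [this]; exact tendsto_id
    have h2 : Tendsto (fun τ : ℂ ↦ Real.exp (-Real.pi * τ.im)) (comap im atTop) (𝓝 0) := by
      have : Tendsto (fun y : ℝ ↦ Real.exp (-Real.pi * y)) atTop (𝓝 0) :=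
        Real.tendsto_exp_atBot.comp
          (tendsto_id.const_mul_atTop_of_neg (by linarith [Real.pi_pos]))
      exact this.comp tendsto_comap
    have h3 := ((isBigO_at_im_infty_jacobiTheta_sub_one.trans_tendsto h2).comp h1).add_const 1
    simpa [Function.comp_def] using h3
  have hR : Tendsto (fun t : ℝ ↦
      (-I * (1 / (2 * a) + I / (4 * a ^ 2) * ((t⁻¹ : ℝ) : ℂ))) ^ (1 / 2 : ℂ) *
      (1 / (1 + I / (2 * a) * ((t⁻¹ : ℝ) : ℂ)) ^ (1 / 2 : ℂ)) *
      ∑ r ∈ Finset.range (2 * a), cexp (Real.pi * I * r ^ 2 / (2 * a)) *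
        (cosKernel ((r / (2 * a) : ℝ) : UnitAddCircle) t : ℂ)) atTop
      (𝓝 ((-I * (1 / (2 * a) + I / (4 * a ^ 2) * 0)) ^ (1 / 2 : ℂ) *
      (1 / (1 + I / (2 * a) * 0) ^ (1 / 2 : ℂ)) *
      ∑ r ∈ Finset.range (2 * a), cexp (Real.pi * I * r ^ 2 / (2 * a)) * ((1 : ℝ) : ℂ))) := by
    refine Tendsto.mul (Tendsto.mul ?_ ?_) ?_
    · refine Tendsto.cpow (((hinv.const_mul _).const_add _).const_mul _) tendsto_const_nhds ?_
      -- The limit point `-i / (2a)` is off the branch cut because its imaginary part is nonzero.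
      right
      have : (-I * (1 / (2 * a) + I / (4 * a ^ 2) * 0) : ℂ) = ((-(1 / (2 * a)) : ℝ) : ℂ) * I := by
        push_cast; ring
      rw [this]
      simp [ha.ne']
    · refine Tendsto.div tendsto_const_nhds
        (Tendsto.cpow ((hinv.const_mul _).const_add _) tendsto_const_nhds ?_) ?_
      · left; simp
      · simp
    · refine tendsto_finsetSum _ fun r _ ↦ Tendsto.const_mul _ ?_
      exact (continuous_ofReal.tendsto 1).comp (tendsto_cosKernel _)
  have hEq : ∀ᶠ t : ℝ in atTop, jacobiTheta (-1 / (2 * a) + I * t) =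
      (-I * (1 / (2 * a) + I / (4 * a ^ 2) * ((t⁻¹ : ℝ) : ℂ))) ^ (1 / 2 : ℂ) *
      (1 / (1 + I / (2 * a) * ((t⁻¹ : ℝ) : ℂ)) ^ (1 / 2 : ℂ)) *
      ∑ r ∈ Finset.range (2 * a), cexp (Real.pi * I * r ^ 2 / (2 * a)) *
        (cosKernel ((r / (2 * a) : ℝ) : UnitAddCircle) t : ℂ) := by
    filter_upwards [eventually_gt_atTop 0] with t ht
    have ht' : (t : ℂ) ≠ 0 := by exact_mod_cast ht.ne'
    have hne : (1 + I / (2 * a) * ((t⁻¹ : ℝ) : ℂ)) ≠ 0 := by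
      intro h
      have := congrArg re h
      have h2 : (I / (2 * a) * ((t⁻¹ : ℝ) : ℂ)) = ((1 / (2 * a) * t⁻¹ : ℝ) : ℂ) * I := by
        push_cast; ring
      rw [h2] at this
      simp at this
    have hne2 : (2 * a * t + I : ℂ) ≠ 0 := by
      intro h
      apply hne
      push_cast
      field_simp
      linear_combination h
    set τ : ℂ := 1 / (2 * a) + I / (4 * a ^ 2 * t) with hτ
    have hτ2 : 1 / (2 * a) + I / (4 * a ^ 2) * ((t⁻¹ : ℝ) : ℂ) = τ := by
      rw [hτ]; push_cast; field_simp
    have hτ3 : τ = (2 * a * t + I) / (4 * a ^ 2 * t) := by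
      rw [hτ]; field_simp
      ring
    have hτ0 : τ ≠ 0 := by
      rw [hτ3]
      exact div_ne_zero hne2 (by simp [ha', ht'])
    have hs : -I * (-1 / (2 * a) + I * t) = t * (1 + I / (2 * a) * ((t⁻¹ : ℝ) : ℂ)) := by
      push_cast
      field_simp
      ring_nf
      simp only [I_sq]
      ring
    have hs0 : (-1 / (2 * a) + I * t : ℂ) ≠ 0 := by
      intro h
      rw [h, mul_zero] at hs
      exact mul_ne_zero ht' hne hs.symm
    have hper (k : ℕ) (z : ℂ) : jacobiTheta (2 * k + z) = jacobiTheta z := by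
      induction k with
      | zero => simp
      | succ k ih => rw [← ih, ← jacobiTheta_two_add (2 * k + z)]; congr 1; push_cast; ring
    have hconn : -1 / (-1 / (2 * a) + I * t : ℂ) = 2 * a + -1 / τ := by
      have h4 : (-1 / (2 * a) + I * t : ℂ) = I * (2 * a * t + I) / (2 * a) := by
        field_simp
        ring_nf
        simp only [I_sq]
        ring
      rw [h4, hτ3]
      field_simp
      ring_nf
      simp only [I_sq]
      ring
    have hF1 : jacobiTheta (-1 / (2 * a) + I * t) =
        1 / (-I * (-1 / (2 * a) + I * t)) ^ (1 / 2 : ℂ) *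
          jacobiTheta (-1 / (-1 / (2 * a) + I * t)) := by
      rw [jacobiTheta_eq_jacobiTheta₂, jacobiTheta₂_functional_equation,
        jacobiTheta_eq_jacobiTheta₂]
      simp
    have hF2 : jacobiTheta (-1 / τ) = (-I * τ) ^ (1 / 2 : ℂ) * jacobiTheta τ := by
      rw [jacobiTheta_eq_jacobiTheta₂ τ, jacobiTheta₂_functional_equation,
        jacobiTheta_eq_jacobiTheta₂]
      have : (-I * τ) ^ (1 / 2 : ℂ) ≠ 0 := by
        rw [Ne, cpow_eq_zero_iff]
        simp [hτ0]
      simp only [zero_div, ne_eq, OfNat.ofNat_ne_zero, not_false_eq_true, zero_pow, mul_zero,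
        Complex.exp_zero, mul_one]
      field_simp
    have hsq : (t : ℂ) ^ (1 / 2 : ℂ) ≠ 0 := by
      rw [Ne, cpow_eq_zero_iff]; simp [ht']
    rw [hF1, hconn, hper, hF2, hτ2, jacobiTheta_split ha ht, hs, ofReal_mul_cpow ht hne]
    have hsq2 : (1 + I / (2 * a) * ((t⁻¹ : ℝ) : ℂ)) ^ (1 / 2 : ℂ) ≠ 0 := by
      rw [Ne, cpow_eq_zero_iff]; simp only [hne, false_and, not_false_eq_true]
    generalize (1 + I / (2 * a) * ((t⁻¹ : ℝ) : ℂ)) ^ (1 / 2 : ℂ) = X at *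
    generalize (t : ℂ) ^ (1 / 2 : ℂ) = Y at *
    field_simp
  have := tendsto_nhds_unique (hL.congr' hEq) hR
  simpa using this.symm

open Complex in
lemma gauss_sum_phase {a : ℕ} (ha : 0 < a) :
    ∃ r : ℝ, 0 < r ∧ ∑ j ∈ Finset.range (2 * a), cexp (Real.pi * I * j ^ 2 / (2 * a)) =
      r * cexp (Real.pi * I / 4) := by
  have haR : (0 : ℝ) < 1 / (2 * a) := by
    have : (0 : ℝ) < a := by exact_mod_cast ha
    positivity
  have h := gauss_sum_mul ha
  have h1 : (-I * (1 / (2 * a)) : ℂ) = ((1 / (2 * a) : ℝ) : ℂ) * (-I) := by push_cast; ring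
  have h2 : (-I : ℂ) ^ (1 / 2 : ℂ) = cexp (-(Real.pi * I / 4)) := by
    rw [cpow_def_of_ne_zero (by simp), log_neg_I]
    congr 1; ring
  have h3 : ((1 / (2 * a) : ℝ) : ℂ) ^ (1 / 2 : ℂ) = (((1 / (2 * a) : ℝ) ^ (1 / 2 : ℝ) : ℝ) : ℂ) := by
    rw [ofReal_cpow haR.le]; simp
  rw [h1, ofReal_mul_cpow haR (by simp), h2, h3] at h
  have hpos := Real.rpow_pos_of_pos haR (1 / 2)
  generalize (1 / (2 * a) : ℝ) ^ (1 / 2 : ℝ) = q at *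
  refine ⟨q⁻¹, inv_pos.2 hpos, ?_⟩
  have hq : (q : ℂ) ≠ 0 := by exact_mod_cast hpos.ne'
  rw [Complex.exp_neg] at h
  have := Complex.exp_ne_zero (Real.pi * I / 4)
  push_cast
  field_simp at h ⊢
  linear_combination h

/-! ### Gauss sums over `ℤ/N` -/

lemma sum_range_mul_of_periodic {f : ℕ → ℂ} {p : ℕ} (hf : ∀ j, f (j + p) = f j) (k : ℕ) :
    ∑ j ∈ Finset.range (p * k), f j = k * ∑ j ∈ Finset.range p, f j := by
  have hf' : ∀ m j, f (p * m + j) = f j := by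
    intro m
    induction m with
    | zero => simp
    | succ m ih => intro j; rw [← ih j, ← hf (p * m + j)]; congr 1; ring
  induction k with
  | zero => simp
  | succ k ih =>
    rw [Nat.mul_succ, Finset.sum_range_add, ih]
    simp only [hf']
    push_cast; ring

lemma sum_zmod_eq_sum_range {N : ℕ} [NeZero N] (g : ZMod N → ℂ) :
    ∑ y : ZMod N, g y = ∑ j ∈ Finset.range N, g (j : ℕ) := by
  refine (Finset.sum_bij (fun j _ ↦ ((j : ℕ) : ZMod N)) (by simp) ?_ ?_ (by simp)).symm
  · intro a ha b hb h
    rw [ZMod.natCast_eq_natCast_iff'] at h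
    rwa [Nat.mod_eq_of_lt (Finset.mem_range.1 ha), Nat.mod_eq_of_lt (Finset.mem_range.1 hb)] at h
  · intro y _
    exact ⟨y.val, Finset.mem_range.2 y.val_lt, by simp⟩

open Complex in
/-- The sum over `ℤ/4ac` of `exp (2πi c y² / (4ac)) = exp (πi y² / (2a))` runs through `2c` full periods
of the Gauss sum of `gauss_sum_phase`. -/
lemma gauss_sum_zmod_pos {N : ℕ} [NeZero N] {a c : ℕ} (h : 4 * a * c = N) :
    ∃ r : ℝ, 0 < r ∧ ∑ y : ZMod N, ZMod.stdAddChar ((c : ZMod N) * y ^ 2) =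
      r * cexp (Real.pi * I / 4) := by
  have hN : N ≠ 0 := NeZero.ne N
  have ha : 0 < a := by
    rcases Nat.eq_zero_or_pos a with h0 | h0
    · simp [h0] at h; omega
    · exact h0
  have hc : 0 < c := by
    rcases Nat.eq_zero_or_pos c with h0 | h0
    · simp [h0] at h; omega
    · exact h0
  have ha' : (a : ℂ) ≠ 0 := by exact_mod_cast ha.ne'
  have hc' : (c : ℂ) ≠ 0 := by exact_mod_cast hc.ne'
  obtain ⟨r, hr, hs⟩ := gauss_sum_phase ha
  refine ⟨(2 * c : ℕ) * r, by positivity, ?_⟩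
  have hterm (j : ℕ) : ZMod.stdAddChar ((c : ZMod N) * (j : ZMod N) ^ 2) =
      cexp (Real.pi * I * j ^ 2 / (2 * a)) := by
    have := ZMod.stdAddChar_coe (N := N) ((c : ℤ) * (j : ℤ) ^ 2)
    push_cast at this
    rw [this, ← h]
    congr 1
    push_cast
    field_simp
    ring
  rw [sum_zmod_eq_sum_range]
  simp only [hterm]
  have hN2 : N = 2 * a * (2 * c) := by rw [← h]; ring
  rw [hN2, sum_range_mul_of_periodic, hs]
  · push_cast; ring
  · intro j
    rw [Complex.exp_eq_exp_iff_exists_int]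
    refine ⟨j + a, ?_⟩
    push_cast
    field_simp
    ring

open Complex in
/-- The Gauss sum of `c y²` over `ℤ/4dc` has phase `exp (πi sign d / 4)`; the case of negative `d`
follows from that of positive `d` by complex conjugation. -/
lemma gauss_sum_zmod {N : ℕ} [NeZero N] {d c : ℤ} (h : 4 * d * c = N) :
    ∃ r : ℝ, 0 < r ∧ ∑ y : ZMod N, ZMod.stdAddChar ((c : ZMod N) * y ^ 2) =
      r * cexp (Real.pi * I / 4 * d.sign) := by
  have hN : 0 < (N : ℤ) := by exact_mod_cast Nat.pos_of_ne_zero (NeZero.ne N)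
  rcases lt_trichotomy d 0 with hd | hd | hd
  · have hc : c < 0 := by nlinarith
    obtain ⟨a, rfl⟩ : ∃ a : ℕ, d = -a := ⟨d.natAbs, by omega⟩
    obtain ⟨b, rfl⟩ : ∃ b : ℕ, c = -b := ⟨c.natAbs, by omega⟩
    obtain ⟨r, hr, hs⟩ := gauss_sum_zmod_pos (N := N) (a := a) (c := b)
      (by zify; linear_combination h)
    refine ⟨r, hr, ?_⟩
    rw [Int.sign_eq_neg_one_of_neg hd]
    have := congrArg (starRingEnd ℂ) hs
    rw [map_sum, map_mul, conj_ofReal, ← exp_conj] at this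
    convert this using 2 with y
    · rw [← AddChar.map_neg_eq_conj]
      congr 1; push_cast; ring
    · congr 1
      have h4 : (starRingEnd ℂ) 4 = 4 := map_ofNat _ 4
      simp [map_div₀, h4]
      ring
  · subst hd; omega
  · have hc : 0 < c := by nlinarith
    obtain ⟨a, rfl⟩ : ∃ a : ℕ, d = a := ⟨d.natAbs, by omega⟩
    obtain ⟨b, rfl⟩ : ∃ b : ℕ, c = b := ⟨c.natAbs, by omega⟩
    obtain ⟨r, hr, hs⟩ := gauss_sum_zmod_pos (N := N) (a := a) (c := b) (by exact_mod_cast h)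
    refine ⟨r, hr, ?_⟩
    rw [Int.sign_eq_one_of_pos hd]
    simpa using hs

/-! ### Diagonalisation of integral forms -/

/-- Clearing denominators in a rational orthogonal basis diagonalises a nonsingular integral form on a
sublattice of finite index; scaling that basis by `2` makes the diagonal entries even. -/
lemma exists_int_diagonalization {n : ℕ} (A : Matrix (Fin n) (Fin n) ℤ) (hA : A.IsSymm)
    (hdet : A.det ≠ 0) :
    ∃ (P : Matrix (Fin n) (Fin n) ℤ) (d : Fin n → ℤ), (∀ i, d i ≠ 0) ∧
      Pᵀ * A * P = diagonal fun i ↦ 2 * d i := by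
  set B : Matrix (Fin n) (Fin n) ℚ := A.map (Int.cast : ℤ → ℚ) with hB
  have hBsymm : B.IsSymm := hA.map _
  have hs : LinearMap.IsSymm (Matrix.toBilin' B) := by
    refine ⟨fun x y ↦ ?_⟩
    simp only [Matrix.toBilin'_apply', RingHom.id_apply]
    rw [dotProduct_mulVec, ← mulVec_transpose, hBsymm.eq, dotProduct_comm]
  obtain ⟨b₀, hb₀⟩ := LinearMap.BilinForm.exists_orthogonal_basis (B := Matrix.toBilin' B) hs
  let b : Module.Basis (Fin n) ℚ (Fin n → ℚ) :=
    b₀.reindex (finCongr (by simp))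
  have hb : ∀ i j, i ≠ j → b i ⬝ᵥ (B *ᵥ b j) = 0 := by
    intro i j hij
    have := hb₀ (i := (finCongr (by simp)).symm i) (j := (finCongr (by simp)).symm j)
      (by simpa using hij)
    simpa [b, Function.onFun, Matrix.toBilin'_apply'] using this
  obtain ⟨k, hk⟩ := IsLocalization.exist_integer_multiples_of_finite (nonZeroDivisors ℤ)
    (S := ℚ) (fun p : Fin n × Fin n ↦ b p.2 p.1)
  choose P₀ hP₀ using hk
  have hk0 : ((k : ℤ) : ℚ) ≠ 0 := by exact_mod_cast nonZeroDivisors.ne_zero k.2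
  let P : Matrix (Fin n) (Fin n) ℤ := Matrix.of fun i j ↦ 2 * P₀ (i, j)
  have hP : P.map (Int.cast : ℤ → ℚ) = (2 * (k : ℤ) : ℚ) • (Matrix.of fun i j ↦ b j i) := by
    ext i j
    have := hP₀ (i, j)
    simp only [algebraMap_int_eq, eq_intCast, zsmul_eq_mul] at this
    simp [P, this, mul_assoc]
  have hbdet : (Matrix.of fun i j ↦ b j i).det ≠ 0 := by
    have : (Matrix.of fun i j ↦ b j i) = (Pi.basisFun ℚ (Fin n)).toMatrix b := by
      ext i j; simp [Module.Basis.toMatrix_apply]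
    rw [this]
    have h2 := (Pi.basisFun ℚ (Fin n)).toMatrix_mul_toMatrix_flip b
    intro h0
    have := congrArg Matrix.det h2
    rw [det_mul, h0] at this
    simp at this
  have hPdet : P.det ≠ 0 := by
    intro h0
    have h1 : (P.map (Int.cast : ℤ → ℚ)).det = 0 := by
      have := (Int.castRingHom ℚ).map_det P
      rw [h0] at this
      simpa using this.symm
    rw [hP, det_smul] at h1
    simp [hk0, hbdet] at h1
  have hoff : ∀ i j, i ≠ j → (Pᵀ * A * P) i j = 0 := by
    intro i j hij
    have h1 : ((Pᵀ * A * P).map (Int.cast : ℤ → ℚ)) i j = 0 := by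
      have : ((Pᵀ * A * P).map (Int.castRingHom ℚ)) =
        (P.map (Int.cast : ℤ → ℚ))ᵀ * B * P.map (Int.cast : ℤ → ℚ) := by
        rw [Matrix.map_mul, Matrix.map_mul]; rfl
      have h2 : ((Pᵀ * A * P).map (Int.cast : ℤ → ℚ)) =
        (P.map (Int.cast : ℤ → ℚ))ᵀ * B * P.map (Int.cast : ℤ → ℚ) := this
      rw [h2, hP, transpose_smul, smul_mul, smul_mul, mul_smul_comm, Matrix.smul_apply, Matrix.smul_apply,
        Matrix.mul_assoc]
      have h3 := hb i j hij
      have h4 : ((of fun i j ↦ b j i)ᵀ * (B * of fun i j ↦ b j i)) i j = b i ⬝ᵥ (B *ᵥ b j) := rfl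
      rw [h4, h3]; simp
    simpa using h1
  have hdiag : ∀ i, ∃ d, (Pᵀ * A * P) i i = 2 * d := by
    intro i
    refine ⟨2 * ((Matrix.of fun i j ↦ P₀ (i, j))ᵀ * A * (Matrix.of fun i j ↦ P₀ (i, j))) i i, ?_⟩
    have : P = (2 : ℤ) • (Matrix.of fun i j ↦ P₀ (i, j)) := by ext i j; simp [P]
    rw [this, transpose_smul, smul_mul, smul_mul, mul_smul_comm, Matrix.smul_apply, Matrix.smul_apply]
    simp
  choose d hd using hdiag
  have hD : Pᵀ * A * P = diagonal fun i ↦ 2 * d i := by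
    ext i j
    by_cases h : i = j
    · subst h; simp [hd]
    · rw [hoff i j h, diagonal_apply_ne _ h]
  refine ⟨P, d, fun i hi ↦ ?_, hD⟩
  have h1 := congrArg Matrix.det hD
  rw [det_mul, det_mul, det_transpose, det_diagonal,
    Finset.prod_eq_zero (Finset.mem_univ i) (by simp [hi])] at h1
  exact mul_ne_zero (mul_ne_zero hPdet hdet) hPdet h1

/-- A congruence `Rᵀ B R = diag w` by a nonsingular `R` is an equivalence of the quadratic form of `B`
with the diagonal form of weights `w`. -/
lemma equivalent_of_congr {n : ℕ} (B R : Matrix (Fin n) (Fin n) ℝ) (w : Fin n → ℝ)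
    (hR : R.det ≠ 0) (h : Rᵀ * B * R = diagonal w) :
    QuadraticMap.Equivalent (Matrix.toBilin' B).toQuadraticMap
      (QuadraticMap.weightedSumSquares ℝ w) := by
  refine QuadraticMap.Equivalent.symm ⟨⟨Matrix.toLinearEquiv' R
    (Matrix.invertibleOfIsUnitDet R hR.isUnit), fun x ↦ ?_⟩⟩
  have h1 : x ⬝ᵥ ((Rᵀ * B * R) *ᵥ x) = (R *ᵥ x) ⬝ᵥ (B *ᵥ (R *ᵥ x)) := by
    rw [← mulVec_mulVec, ← mulVec_mulVec, dotProduct_mulVec, ← mulVec_transpose, transpose_transpose]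
  rw [h] at h1
  simp only [LinearMap.BilinMap.toQuadraticMap_apply, Matrix.toBilin'_apply',
    QuadraticMap.weightedSumSquares_apply]
  refine h1.symm.trans ?_
  simp only [dotProduct, mulVec_diagonal, smul_eq_mul]
  exact Finset.sum_congr rfl fun i _ ↦ by ring

/-! ### The Gauss sum through a self-dual subgroup -/

/-- Orthogonality of characters on `(ℤ/N)ⁿ`. -/
lemma sum_stdAddChar_dotProduct {n N : ℕ} [NeZero N] (w : Fin n → ZMod N) :
    ∑ z : Fin n → ZMod N, (ZMod.stdAddChar (w ⬝ᵥ z) : ℂ) =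
      if w = 0 then (Fintype.card (Fin n → ZMod N) : ℂ) else 0 := by
  split_ifs with hw
  · simp [hw]
  · let ψ : AddChar (Fin n → ZMod N) ℂ :=
      { toFun := fun z ↦ ZMod.stdAddChar (w ⬝ᵥ z)
        map_zero_eq_one' := by simp
        map_add_eq_mul' := fun x y ↦ by rw [dotProduct_add, AddChar.map_add_eq_mul] }
    refine (AddChar.sum_eq_zero_iff_ne_zero (ψ := ψ)).2 fun h ↦ hw ?_
    ext i
    have h1 := DFunLike.congr_fun h (Pi.single i 1)
    have h2 : (ZMod.stdAddChar (w i) : ℂ) = 1 := by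
      simpa [ψ] using h1
    rw [← AddChar.map_zero_eq_one (ZMod.stdAddChar : AddChar (ZMod N) ℂ)] at h2
    exact ZMod.injective_stdAddChar h2

/-- Over `ℤ`, a one-sided inverse up to a nonzero scalar is two-sided. -/
lemma smul_one_comm_of_mul {n : ℕ} {X Y : Matrix (Fin n) (Fin n) ℤ} {N : ℤ} (hN : N ≠ 0)
    (h : X * Y = N • 1) : Y * X = N • 1 := by
  have hX : X.det ≠ 0 := by
    intro h0
    have := congrArg Matrix.det h
    rw [det_mul, h0, det_smul] at this
    simp only [zero_mul, det_one, mul_one, Fintype.card_fin] at this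
    exact pow_ne_zero n hN this.symm
  have h1 : X * (Y * X - N • 1) = 0 := by
    rw [mul_sub, ← Matrix.mul_assoc, h, smul_mul, one_mul, mul_smul_comm, mul_one, sub_self]
  have h2 : X.adjugate * (X * (Y * X - N • 1)) = 0 := by rw [h1, mul_zero]
  rw [← Matrix.mul_assoc, adjugate_mul, smul_mul, one_mul] at h2
  exact sub_eq_zero.1 ((smul_eq_zero.1 h2).resolve_left hX)

lemma mulVec_dotProduct_eq {n : ℕ} (X : Matrix (Fin n) (Fin n) ℤ) (x y : Fin n → ℤ) :
    (X *ᵥ x) ⬝ᵥ y = x ⬝ᵥ (Xᵀ *ᵥ y) := by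
  rw [dotProduct_comm, dotProduct_mulVec, ← mulVec_transpose, dotProduct_comm]

/-- The Gauss sum of `q(y) = ∑ cᵢ yᵢ²` over `(ℤ/N)ⁿ` has phase `exp (πi vᵀAv / 4)`.

With `M = Pᵀ A` one has `q(M z) = (N / 2) zᵀAz ≡ (N / 2) zᵀAv` mod `N`, so a translation by `M z` changes
`q(y)` by a term `w(y) ⬝ z` that is *linear* in `z`. Averaging over all `z` kills every `y` with
`w(y) ≠ 0`. If `w(y) = 0`, unimodularity of `A` gives `2 y = M (2u - v)` for an integral lift of `y` and
an integral `u`, and `2u - v` is again characteristic with the same square mod `8`, so each remaining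
summand equals `exp (πi vᵀAv / 4)`. -/
lemma self_dual_sum {n : ℕ} (A P : Matrix (Fin n) (Fin n) ℤ) (hA : A.IsSymm)
    (hdet : A.det = 1 ∨ A.det = -1)
    (v : Fin n → ℤ)
    (hv : ∀ x : Fin n → ℤ, (2 : ℤ) ∣ (x ⬝ᵥ A *ᵥ x - x ⬝ᵥ A *ᵥ v))
    (d c : Fin n → ℤ) (hP : Pᵀ * A * P = diagonal fun i ↦ 2 * d i)
    {N : ℕ} [NeZero N] {m : ℤ} (hm : (N : ℤ) = 2 * m) (hc : ∀ i, 4 * d i * c i = N) :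
    ∃ r : ℝ, 0 ≤ r ∧ ∑ y : Fin n → ZMod N,
      (ZMod.stdAddChar (∑ i, (c i : ZMod N) * y i ^ 2) : ℂ) =
        r * Complex.exp (Real.pi * Complex.I / 4 * (v ⬝ᵥ A *ᵥ v : ℤ)) := by
  have hN0 : (N : ℤ) ≠ 0 := by exact_mod_cast NeZero.ne N
  have hm0 : m ≠ 0 := by rintro rfl; omega
  have hXY : (Pᵀ * A) * ((2 : ℤ) • (P * diagonal c)) = (N : ℤ) • 1 := by
    rw [mul_smul_comm, ← Matrix.mul_assoc, hP, diagonal_mul_diagonal]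
    ext i j
    by_cases hij : i = j
    · subst hij; simp; linear_combination hc i
    · simp [hij]
  have hYX := smul_one_comm_of_mul hN0 hXY
  have hPCP : P * diagonal c * (Pᵀ * A) = m • 1 := by
    rw [smul_mul, hm, mul_smul] at hYX
    exact smul_right_injective _ (two_ne_zero' ℤ) hYX
  set M := Pᵀ * A with hM
  have hMT : Mᵀ = A * P := by rw [hM, transpose_mul, transpose_transpose, hA.eq]
  let Q : (Fin n → ℤ) → ℤ := fun Y ↦ Y ⬝ᵥ (diagonal c *ᵥ Y)
  have hQ (Y) : Q Y = ∑ i, c i * Y i ^ 2 := by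
    simp only [Q, dotProduct, mulVec_diagonal]
    exact Finset.sum_congr rfl fun i _ ↦ by ring
  have hQM (Z) : Q (M *ᵥ Z) = m * (Z ⬝ᵥ A *ᵥ Z) := by
    simp only [Q]
    rw [mulVec_dotProduct_eq, hMT, mulVec_mulVec, mulVec_mulVec, Matrix.mul_assoc A P,
      Matrix.mul_assoc A, hPCP, mul_smul_comm, mul_one, smul_mulVec, dotProduct_smul, smul_eq_mul]
  let W : (Fin n → ℤ) → (Fin n → ℤ) := fun Y ↦
    A *ᵥ (((2 : ℤ) • (P * diagonal c)) *ᵥ Y + m • v)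
  have hQadd (Y Z) : Q (Y + M *ᵥ Z) =
      Q Y + W Y ⬝ᵥ Z + m * (Z ⬝ᵥ A *ᵥ Z - Z ⬝ᵥ A *ᵥ v) := by
    have h1 : Q (Y + M *ᵥ Z) = Q Y + 2 * ((M *ᵥ Z) ⬝ᵥ (diagonal c *ᵥ Y)) + Q (M *ᵥ Z) := by
      have h2 : Y ⬝ᵥ (diagonal c *ᵥ (M *ᵥ Z)) = (M *ᵥ Z) ⬝ᵥ (diagonal c *ᵥ Y) := by
        rw [dotProduct_comm, mulVec_dotProduct_eq, diagonal_transpose]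
      simp only [Q, mulVec_add, add_dotProduct, dotProduct_add, h2]
      ring
    have h3 : W Y ⬝ᵥ Z = 2 * ((M *ᵥ Z) ⬝ᵥ (diagonal c *ᵥ Y)) + m * (Z ⬝ᵥ A *ᵥ v) := by
      simp only [W]
      rw [dotProduct_comm, mulVec_add, dotProduct_add, mulVec_smul, dotProduct_smul, smul_mulVec,
        mulVec_smul, dotProduct_smul, mulVec_dotProduct_eq, hMT]
      simp only [mulVec_mulVec, Matrix.mul_assoc, smul_eq_mul]
    rw [h1, h3, hQM]
    ring
  -- `q` and `w` are the reductions of `Q` and `W` modulo `N`.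
  let φ : ℤ →+* ZMod N := Int.castRingHom (ZMod N)
  let q : (Fin n → ZMod N) → ZMod N := fun y ↦ ∑ i, (c i : ZMod N) * y i ^ 2
  let w : (Fin n → ZMod N) → (Fin n → ZMod N) := fun y ↦
    A.map φ *ᵥ (((2 : ℤ) • (P * diagonal c)).map φ *ᵥ y + φ ∘ (m • v))
  have hlift (y : Fin n → ZMod N) : ∃ Y : Fin n → ℤ, φ ∘ Y = y :=
    ⟨fun i ↦ (y i).cast, by ext i; simp [φ]⟩
  have hmv (X : Matrix (Fin n) (Fin n) ℤ) (Y : Fin n → ℤ) : X.map φ *ᵥ (φ ∘ Y) = φ ∘ (X *ᵥ Y) := by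
    ext i; exact (RingHom.map_mulVec φ X Y i).symm
  have hadd (X Y : Fin n → ℤ) : φ ∘ X + φ ∘ Y = φ ∘ (X + Y) := by ext i; simp
  have hqφ (Y : Fin n → ℤ) : q (φ ∘ Y) = φ (Q Y) := by
    rw [hQ]; simp [q, φ]
  have hwφ (Y : Fin n → ℤ) : w (φ ∘ Y) = φ ∘ (W Y) := by
    simp only [w, W]
    rw [hmv, hadd, hmv]
  have hφN : φ N = 0 := by simp [φ]
  have hqadd (y z) : q (y + M.map φ *ᵥ z) = q y + w y ⬝ᵥ z := by
    obtain ⟨Y, rfl⟩ := hlift y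
    obtain ⟨Z, rfl⟩ := hlift z
    obtain ⟨k, hk⟩ := hv Z
    rw [hmv, hadd, hqφ, hqφ, hwφ, hQadd, hk, map_add, map_add]
    have h1 : φ (m * (2 * k)) = 0 := by
      rw [show m * (2 * k) = N * k by rw [hm]; ring, map_mul, hφN, zero_mul]
    rw [h1, add_zero, RingHom.map_dotProduct φ (W Y) Z]
  have hval (y) (hy : w y = 0) : (ZMod.stdAddChar (q y) : ℂ) =
      Complex.exp (Real.pi * Complex.I / 4 * (v ⬝ᵥ A *ᵥ v : ℤ)) := by
    obtain ⟨Y, rfl⟩ := hlift y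
    have hunit : IsUnit (A.map φ).det := by
      have : (A.map φ).det = φ A.det := (φ.map_det A).symm
      rw [this]
      apply IsUnit.map
      rcases hdet with h | h <;> simp [h]
    simp only [w] at hy
    rw [hmv, hadd] at hy
    have hy' := Matrix.mulVec_injective_of_isUnit ((Matrix.isUnit_iff_isUnit_det _).2 hunit)
      (hy.trans (mulVec_zero _).symm)
    have hdvd (i) : (N : ℤ) ∣ (((2 : ℤ) • (P * diagonal c)) *ᵥ Y + m • v) i :=
      (ZMod.intCast_zmod_eq_zero_iff_dvd _ N).1 (congrFun hy' i)
    choose u hu using hdvd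
    have hu' : ((2 : ℤ) • (P * diagonal c)) *ᵥ Y + m • v = (N : ℤ) • u := by
      ext i; rw [hu]; simp
    have h2Y : (2 : ℤ) • Y = M *ᵥ ((2 : ℤ) • u - v) := by
      have h0 : M *ᵥ (((2 : ℤ) • (P * diagonal c)) *ᵥ Y) = (N : ℤ) • Y := by
        rw [mulVec_mulVec, hXY, smul_mulVec, one_mulVec]
      have h1 : M *ᵥ (((2 : ℤ) • (P * diagonal c)) *ᵥ Y + m • v) = M *ᵥ ((N : ℤ) • u) := by
        rw [hu']
      rw [mulVec_add, h0, mulVec_smul, mulVec_smul, hm] at h1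
      refine smul_right_injective _ hm0 ?_
      simp only [mulVec_sub, mulVec_smul, smul_sub, smul_smul]
      rw [mul_comm m 2, ← h1]
      abel
    have h4Q : 4 * Q Y = m * (((2 : ℤ) • u - v) ⬝ᵥ A *ᵥ ((2 : ℤ) • u - v)) := by
      rw [← hQM, ← h2Y]
      simp only [Q, mulVec_smul, dotProduct_smul, smul_dotProduct, smul_eq_mul]
      ring
    obtain ⟨k, hk⟩ := hv u
    have h8 : 4 * Q Y = m * (8 * k + v ⬝ᵥ A *ᵥ v) := by
      have h5 : v ⬝ᵥ A *ᵥ u = u ⬝ᵥ A *ᵥ v := by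
        rw [dotProduct_comm, mulVec_dotProduct_eq, hA.eq]
      rw [h4Q]
      simp only [mulVec_sub, mulVec_smul, dotProduct_sub, sub_dotProduct, smul_dotProduct,
        dotProduct_smul, h5, smul_eq_mul]
      linear_combination 4 * m * hk
    rw [hqφ]
    refine (ZMod.stdAddChar_coe (N := N) (Q Y)).trans ?_
    rw [Complex.exp_eq_exp_iff_exists_int]
    refine ⟨k, ?_⟩
    have hmC : (m : ℂ) ≠ 0 := by exact_mod_cast hm0
    have hNC : (N : ℂ) = 2 * m := by exact_mod_cast hm
    have h8C : 4 * (Q Y : ℂ) = m * (8 * k + (v ⬝ᵥ A *ᵥ v : ℤ)) := by exact_mod_cast h8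
    rw [hNC]
    field_simp
    linear_combination h8C
  let S : ℂ := ∑ y, ZMod.stdAddChar (q y)
  set E : ℂ := Complex.exp (Real.pi * Complex.I / 4 * (v ⬝ᵥ A *ᵥ v : ℤ)) with hE
  have hcard : (Fintype.card (Fin n → ZMod N) : ℂ) ≠ 0 := by
    exact_mod_cast Fintype.card_ne_zero
  have hS : (Fintype.card (Fin n → ZMod N) : ℂ) * S = (Fintype.card (Fin n → ZMod N) : ℂ) *
      ((Finset.univ.filter fun y ↦ w y = 0).card * E) := by
    calc (Fintype.card (Fin n → ZMod N) : ℂ) * S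
        = ∑ z : Fin n → ZMod N, ∑ y, ZMod.stdAddChar (q (y + M.map φ *ᵥ z)) := by
          have (z : Fin n → ZMod N) : ∑ y, (ZMod.stdAddChar (q (y + M.map φ *ᵥ z)) : ℂ) = S :=
            Fintype.sum_equiv (Equiv.addRight (M.map φ *ᵥ z)) _ _ fun y ↦ rfl
          simp only [this, Finset.sum_const, Finset.card_univ, nsmul_eq_mul]
      _ = ∑ y, ZMod.stdAddChar (q y) * ∑ z, (ZMod.stdAddChar (w y ⬝ᵥ z) : ℂ) := by
          rw [Finset.sum_comm]
          simp only [hqadd, AddChar.map_add_eq_mul, Finset.mul_sum]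
      _ = ∑ y, if w y = 0 then (Fintype.card (Fin n → ZMod N) : ℂ) * E else 0 := by
          refine Finset.sum_congr rfl fun y _ ↦ ?_
          rw [sum_stdAddChar_dotProduct]
          split_ifs with h
          · rw [hval y h, mul_comm]
          · simp
      _ = _ := by
          rw [← Finset.sum_filter, Finset.sum_const, nsmul_eq_mul]
          ring
  refine ⟨((Finset.univ.filter fun y ↦ w y = 0).card : ℝ), by positivity, ?_⟩
  have := mul_left_cancel₀ hcard hS
  simpa [S, q] using this

/-! ### The signature and the comparison of phases -/

lemma addChar_map_sum {ι G : Type*} [AddCommMonoid G] (ψ : AddChar G ℂ) (s : Finset ι) (f : ι → G) :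
    ψ (∑ i ∈ s, f i) = ∏ i ∈ s, ψ (f i) := by
  classical
  induction s using Finset.induction_on with
  | empty => simp
  | insert i s hi ih => rw [Finset.sum_insert hi, Finset.prod_insert hi, AddChar.map_add_eq_mul, ih]

/-- Sylvester's law of inertia: the spectral decomposition and the integral diagonalisation are two real
diagonalisations of the same form. -/
lemma intSignature_eq_sum_sign {n : ℕ} (A P : Matrix (Fin n) (Fin n) ℤ) (hA : A.IsSymm)
    (d : Fin n → ℤ) (hd : ∀ i, d i ≠ 0) (hP : Pᵀ * A * P = diagonal fun i ↦ 2 * d i) :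
    intSignature A hA = ∑ i, (d i).sign := by
  classical
  set B : Matrix (Fin n) (Fin n) ℝ := A.map ((↑) : ℤ → ℝ) with hB
  have hH := isHermitian_map_real hA
  have e1 : QuadraticMap.Equivalent (Matrix.toBilin' B).toQuadraticMap
      (QuadraticMap.weightedSumSquares ℝ hH.eigenvalues) := by
    refine equivalent_of_congr B (hH.eigenvectorUnitary : Matrix (Fin n) (Fin n) ℝ) _ ?_ ?_
    · intro h0
      have h1 := congrArg Matrix.det (Unitary.coe_star_mul_self hH.eigenvectorUnitary)
      rw [det_mul, h0] at h1
      simp at h1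
    · have h1 := hH.conjStarAlgAut_star_eigenvectorUnitary
      rw [Unitary.conjStarAlgAut_star_apply] at h1
      rw [← conjTranspose_eq_transpose_of_trivial]
      exact h1
  have e2 : QuadraticMap.Equivalent (Matrix.toBilin' B).toQuadraticMap
      (QuadraticMap.weightedSumSquares ℝ fun i ↦ ((2 * d i : ℤ) : ℝ)) := by
    have h1 := congrArg (fun X ↦ X.map (Int.castRingHom ℝ)) hP
    simp only [Matrix.map_mul] at h1
    rw [diagonal_map (map_zero _)] at h1
    have h2 : (P.map (Int.castRingHom ℝ))ᵀ * B * P.map (Int.castRingHom ℝ) =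
        diagonal fun i ↦ ((2 * d i : ℤ) : ℝ) := h1
    refine equivalent_of_congr B (P.map (Int.castRingHom ℝ)) _ ?_ h2
    intro h0
    have h3 := congrArg Matrix.det h2
    rw [det_mul, h0, mul_zero, det_diagonal] at h3
    refine Finset.prod_ne_zero_iff.2 (fun i _ ↦ ?_) h3.symm
    exact_mod_cast mul_ne_zero two_ne_zero (hd i)
  have hpos := (QuadraticForm.sigPos_of_equiv_weightedSumSquares e1).symm.trans
    (QuadraticForm.sigPos_of_equiv_weightedSumSquares e2)
  have hneg := (QuadraticForm.sigNeg_of_equiv_weightedSumSquares e1).symm.trans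
    (QuadraticForm.sigNeg_of_equiv_weightedSumSquares e2)
  have hfin (p : Fin n → Prop) [DecidablePred p] :
      {i | p i}.ncard = (Finset.univ.filter p).card := by
    rw [← Set.ncard_coe_finset]; simp
  rw [hfin, hfin] at hpos hneg
  have hsign (i) : (d i).sign = (if 0 < d i then 1 else 0) - (if d i < 0 then 1 else 0) := by
    rcases lt_trichotomy (d i) 0 with h | h | h
    · simp [Int.sign_eq_neg_one_of_neg h, h, not_lt.2 h.le]
    · simp [h]
    · simp [Int.sign_eq_one_of_pos h, h, not_lt.2 h.le]
  have hp2 (i) : (0 : ℝ) < ((2 * d i : ℤ) : ℝ) ↔ 0 < d i := by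
    rw [Int.cast_pos]; omega
  have hn2 (i) : ((2 * d i : ℤ) : ℝ) < 0 ↔ d i < 0 := by
    rw [Int.cast_lt_zero]; omega
  simp only [hp2, hn2] at hpos hneg
  simp only [hsign, Finset.sum_sub_distrib, Finset.sum_boole]
  rw [← hpos, ← hneg]
  simp only [intSignature]

/-- van der Blij's theorem: for a unimodular symmetric bilinear form `A` over `ℤ` with
characteristic vector `v`, the signature satisfies `σ(A) ≡ vᵀAv (mod 8)`. -/
theorem van_der_blij {n : ℕ} (A : Matrix (Fin n) (Fin n) ℤ) (hA : A.IsSymm)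
    (hdet : A.det = 1 ∨ A.det = -1)
    (v : Fin n → ℤ)
    (hv : ∀ x : Fin n → ℤ, (2 : ℤ) ∣ (x ⬝ᵥ A.mulVec x - x ⬝ᵥ A.mulVec v)) :
    (8 : ℤ) ∣ (intSignature A hA - v ⬝ᵥ A.mulVec v) := by
  obtain ⟨P, d, hd, hP⟩ := exists_int_diagonalization A hA (by rcases hdet with h | h <;> simp [h])
  rw [intSignature_eq_sum_sign A P hA d hd hP]
  set D : ℕ := ∏ i, (d i).natAbs with hD
  have hD0 : D ≠ 0 := Finset.prod_ne_zero_iff.2 fun i _ ↦ by simpa using hd i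
  have : NeZero (4 * D) := ⟨by omega⟩
  have hdvd (i) : ∃ c, 4 * d i * c = (4 * D : ℕ) := by
    obtain ⟨c, hc⟩ : d i ∣ (D : ℤ) :=
      Int.dvd_natCast.2 (Finset.dvd_prod_of_mem (fun i ↦ (d i).natAbs) (Finset.mem_univ i))
    exact ⟨c, by push_cast; rw [hc]; ring⟩
  choose c hc using hdvd
  obtain ⟨s, hs, hsum⟩ := self_dual_sum A P hA hdet v hv d c hP (N := 4 * D) (m := 2 * D)
    (by push_cast; ring) hc
  choose r hr hgauss using fun i ↦ gauss_sum_zmod (N := 4 * D) (hc i)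
  have hprod : ∑ y : Fin n → ZMod (4 * D),
      (ZMod.stdAddChar (∑ i, (c i : ZMod (4 * D)) * y i ^ 2) : ℂ) =
      ((∏ i, r i : ℝ) : ℂ) * Complex.exp (Real.pi * Complex.I / 4 * (∑ i, (d i).sign : ℤ)) := by
    calc _ = ∑ y : Fin n → ZMod (4 * D), ∏ i,
          (ZMod.stdAddChar ((c i : ZMod (4 * D)) * y i ^ 2) : ℂ) := by
          simp only [addChar_map_sum]
      _ = ∏ i, ∑ y : ZMod (4 * D), (ZMod.stdAddChar ((c i : ZMod (4 * D)) * y ^ 2) : ℂ) :=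
          (Fintype.prod_sum fun i (y : ZMod (4 * D)) ↦
            (ZMod.stdAddChar ((c i : ZMod (4 * D)) * y ^ 2) : ℂ)).symm
      _ = _ := by
          simp only [hgauss, Finset.prod_mul_distrib, ← Complex.exp_sum, ← Finset.mul_sum]
          push_cast
          rfl
  have hR : 0 < ∏ i, r i := Finset.prod_pos fun i _ ↦ hr i
  generalize ∏ i, r i = R at *
  generalize ∑ i, (d i).sign = σ at *
  generalize v ⬝ᵥ A *ᵥ v = q at *
  rw [hsum] at hprod
  have hnorm (k : ℤ) : ‖Complex.exp (Real.pi * Complex.I / 4 * (k : ℂ))‖ = 1 := by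
    have : (Real.pi * Complex.I / 4 * (k : ℂ)) = ((Real.pi / 4 * k : ℝ) : ℂ) * Complex.I := by
      push_cast; ring
    rw [this, Complex.norm_exp_ofReal_mul_I]
  have hsR : s = R := by
    have := congrArg norm hprod
    simpa [hnorm, abs_of_nonneg hs, abs_of_pos hR] using this
  rw [hsR] at hprod
  have hexp := mul_left_cancel₀ (Complex.ofReal_ne_zero.2 hR.ne') hprod
  obtain ⟨k, hk⟩ := Complex.exp_eq_exp_iff_exists_int.1 hexp
  refine ⟨-k, ?_⟩
  have hpi : (Real.pi * Complex.I : ℂ) ≠ 0 := by simp [Real.pi_ne_zero]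
  have h1 : (q : ℂ) = σ + 8 * k := by
    refine mul_left_cancel₀ hpi ?_
    linear_combination 4 * hk
  have h2 : q = σ + 8 * k := by exact_mod_cast h1
  rw [h2]; ring
end

section
/- Let (V, λ) be a nonsingular symmetric bilinear form over ℤ/2 and q a ℤ/4-valued quadratic enhancement of λ. Then there exist natural numbers p₊, p₋, m, n and an isometry from (V, λ, q) to the orthogonal direct sum of p₊ copies of P₁, p₋ copies of P₋₁, m copies of q^{0,0} and n copies of q^{2,2}. (Every nonsingular ℤ/4-valued quadratic form over ℤ/2 decomposes, non-uniquely, into these indecomposable pieces.) -/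
/-- The hyperbolic symmetric bilinear form on `(ℤ/2)²`. -/
def lamH : (ZMod 2 × ZMod 2) → (ZMod 2 × ZMod 2) → ZMod 2 :=
  fun x y => x.1 * y.2 + x.2 * y.1

/-- The enhancement `q^{0,0}` of the hyperbolic plane. -/
def q00 : (ZMod 2 × ZMod 2) → ZMod 4 :=
  fun x => 2 * ((x.1.val * x.2.val : ℕ) : ZMod 4)

/-- The enhancement `q^{2,2}` of the hyperbolic plane. -/
def q22 : (ZMod 2 × ZMod 2) → ZMod 4 :=
  fun x => 2 * ((x.1.val + x.2.val + x.1.val * x.2.val : ℕ) : ZMod 4)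

/-- The enhancement `P₁` on `ℤ/2`, with `q(1) = 1`. -/
def qP1 : ZMod 2 → ZMod 4 := fun a => (a.val : ZMod 4)

/-- The enhancement `P₋₁` on `ℤ/2`, with `q(1) = 3`. -/
def qPm1 : ZMod 2 → ZMod 4 := fun a => 3 * (a.val : ZMod 4)

/-- The standard model: the orthogonal direct sum of `p₊` copies of `P₁`, `p₋` copies
of `P₋₁`, `m` copies of `q^{0,0}` and `n` copies of `q^{2,2}`. -/
abbrev StdSpace (pp pm m n : ℕ) :=
  (Fin pp → ZMod 2) × (Fin pm → ZMod 2) ×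
    (Fin m → ZMod 2 × ZMod 2) × (Fin n → ZMod 2 × ZMod 2)

/-- The bilinear form of the standard model. -/
def stdForm (pp pm m n : ℕ) (x y : StdSpace pp pm m n) : ZMod 2 :=
  (∑ i, x.1 i * y.1 i) + (∑ i, x.2.1 i * y.2.1 i) +
    (∑ i, lamH (x.2.2.1 i) (y.2.2.1 i)) + (∑ i, lamH (x.2.2.2 i) (y.2.2.2 i))

/-- The quadratic enhancement of the standard model. -/
def stdQ (pp pm m n : ℕ) (x : StdSpace pp pm m n) : ZMod 4 :=
  (∑ i, qP1 (x.1 i)) + (∑ i, qPm1 (x.2.1 i)) +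
    (∑ i, q00 (x.2.2.1 i)) + (∑ i, q22 (x.2.2.2 i))

/-- The enhanced form `(V, l, q)` is isometric to some standard model. -/
def IsStd {V : Type*} [AddCommGroup V] [Module (ZMod 2) V]
    (l : V →ₗ[ZMod 2] V →ₗ[ZMod 2] ZMod 2) (q : V → ZMod 4) : Prop :=
  ∃ (pp pm m n : ℕ) (e : V ≃ₗ[ZMod 2] StdSpace pp pm m n),
    (∀ x y : V, stdForm pp pm m n (e x) (e y) = l x y) ∧
    (∀ x : V, stdQ pp pm m n (e x) = q x)

/-- The block `(A, b, qA)` can be added to any standard model, giving a standard model up to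
isometry. -/
def IsBlock {A : Type} [AddCommGroup A] [Module (ZMod 2) A]
    (b : A → A → ZMod 2) (qA : A → ZMod 4) : Prop :=
  ∀ pp pm m n : ℕ, ∃ (pp' pm' m' n' : ℕ)
    (g : (A × StdSpace pp pm m n) ≃ₗ[ZMod 2] StdSpace pp' pm' m' n'),
    (∀ x y, stdForm pp' pm' m' n' (g x) (g y) = b x.1 y.1 + stdForm pp pm m n x.2 y.2) ∧
    (∀ x, stdQ pp' pm' m' n' (g x) = qA x.1 + stdQ pp pm m n x.2)

/-- Prepending a coordinate, as a linear equivalence. -/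
def consEquiv (A : Type) [AddCommGroup A] [Module (ZMod 2) A] (k : ℕ) :
    (A × (Fin k → A)) ≃ₗ[ZMod 2] (Fin (k + 1) → A) :=
  Fin.consLinearEquiv (ZMod 2) (fun _ => A)

@[simp] lemma consEquiv_zero (A : Type) [AddCommGroup A] [Module (ZMod 2) A] (k : ℕ)
    (x : A × (Fin k → A)) : consEquiv A k x 0 = x.1 := rfl

@[simp] lemma consEquiv_succ (A : Type) [AddCommGroup A] [Module (ZMod 2) A] (k : ℕ)
    (x : A × (Fin k → A)) (i : Fin k) : consEquiv A k x i.succ = x.2 i := rfl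

/-- Exchanging the first two factors of a threefold product. -/
def swapFirst (A B C : Type) [AddCommGroup A] [Module (ZMod 2) A] [AddCommGroup B]
    [Module (ZMod 2) B] [AddCommGroup C] [Module (ZMod 2) C] :
    (A × B × C) ≃ₗ[ZMod 2] (B × A × C) where
  toFun x := (x.2.1, x.1, x.2.2)
  invFun x := (x.2.1, x.1, x.2.2)
  map_add' _ _ := rfl
  map_smul' _ _ := rfl
  left_inv _ := rfl
  right_inv _ := rfl

/-- Regrouping the first two factors of a threefold product. -/
def groupFirst (A B C : Type) [AddCommGroup A] [Module (ZMod 2) A] [AddCommGroup B]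
    [Module (ZMod 2) B] [AddCommGroup C] [Module (ZMod 2) C] :
    (A × B × C) ≃ₗ[ZMod 2] ((A × B) × C) where
  toFun x := ((x.1, x.2.1), x.2.2)
  invFun x := (x.1.1, x.1.2, x.2)
  map_add' _ _ := rfl
  map_smul' _ _ := rfl
  left_inv _ := rfl
  right_inv _ := rfl

lemma cons_P1 : IsBlock (fun x y : ZMod 2 => x * y) qP1 := by
  intro pp pm m n
  refine ⟨pp + 1, pm, m, n, (groupFirst _ _ _).trans
    ((consEquiv (ZMod 2) pp).prodCongr (LinearEquiv.refl _ _)), ?_, ?_⟩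
  · intro x y
    simp [stdForm, Fin.sum_univ_succ, groupFirst]
    ring
  · intro x
    simp [stdQ, Fin.sum_univ_succ, groupFirst]
    ring

lemma cons_Pm1 : IsBlock (fun x y : ZMod 2 => x * y) qPm1 := by
  intro pp pm m n
  refine ⟨pp, pm + 1, m, n, (swapFirst _ _ _).trans ((LinearEquiv.refl _ _).prodCongr
    ((groupFirst _ _ _).trans
    ((consEquiv (ZMod 2) pm).prodCongr (LinearEquiv.refl _ _)))), ?_, ?_⟩
  · intro x y
    simp [stdForm, Fin.sum_univ_succ, swapFirst, groupFirst]
    ring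
  · intro x
    simp [stdQ, Fin.sum_univ_succ, swapFirst, groupFirst]
    ring

lemma cons_q00 : IsBlock lamH q00 := by
  intro pp pm m n
  refine ⟨pp, pm, m + 1, n, (swapFirst _ _ _).trans ((LinearEquiv.refl _ _).prodCongr
    ((swapFirst _ _ _).trans ((LinearEquiv.refl _ _).prodCongr
    ((groupFirst _ _ _).trans
    ((consEquiv (ZMod 2 × ZMod 2) m).prodCongr (LinearEquiv.refl _ _)))))), ?_, ?_⟩
  · intro x y
    simp [stdForm, Fin.sum_univ_succ, swapFirst, groupFirst]
    ring
  · intro x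
    simp [stdQ, Fin.sum_univ_succ, swapFirst, groupFirst]
    ring

lemma cons_q22 : IsBlock lamH q22 := by
  intro pp pm m n
  refine ⟨pp, pm, m, n + 1, (swapFirst _ _ _).trans ((LinearEquiv.refl _ _).prodCongr
    ((swapFirst _ _ _).trans ((LinearEquiv.refl _ _).prodCongr
    ((swapFirst _ _ _).trans ((LinearEquiv.refl _ _).prodCongr
    (consEquiv (ZMod 2 × ZMod 2) n)))))), ?_, ?_⟩
  · intro x y
    simp [stdForm, Fin.sum_univ_succ, swapFirst]
    ring
  · intro x
    simp [stdQ, Fin.sum_univ_succ, swapFirst]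
    ring

section Step

variable {V : Type*} [AddCommGroup V] [Module (ZMod 2) V]

/-- The inductive step: if `V` splits isometrically as a nonzero block plus a subspace `W`, and
all nondegenerate enhanced forms on subspaces of smaller dimension are standard, so is `V`. -/
lemma glue [FiniteDimensional (ZMod 2) V] (l : V →ₗ[ZMod 2] V →ₗ[ZMod 2] ZMod 2)
    (hnd : ∀ x, (∀ y, l x y = 0) → x = 0) (q : V → ZMod 4)
    (ih : ∀ W : Submodule (ZMod 2) V,
      Module.finrank (ZMod 2) W < Module.finrank (ZMod 2) V →
      (∀ x : W, (∀ y : W, l x y = 0) → x = 0) →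
      IsStd (l.domRestrict₁₂ W W) (fun w : W => q w))
    {A : Type} [AddCommGroup A] [Module (ZMod 2) A] [Nontrivial A]
    {b : A → A → ZMod 2} {qA : A → ZMod 4} (hA : IsBlock b qA) (hb : ∀ a, b 0 a = 0)
    (W : Submodule (ZMod 2) V) (f : V ≃ₗ[ZMod 2] A × W)
    (hf : ∀ w : W, f w = (0, w))
    (hl : ∀ x y, l x y = b (f x).1 (f y).1 + l (f x).2 (f y).2)
    (hqf : ∀ x, q x = qA (f x).1 + q (f x).2) : IsStd l q := by
  have hW : Module.finrank (ZMod 2) W < Module.finrank (ZMod 2) V := by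
    apply Submodule.finrank_lt
    rintro rfl
    obtain ⟨a, ha⟩ := exists_ne (0 : A)
    have h := hf ⟨f.symm (a, 0), trivial⟩
    simp only [LinearEquiv.apply_symm_apply, Prod.mk.injEq] at h
    exact ha h.1
  obtain ⟨pp, pm, m, n, e, he, heq⟩ := ih W hW (by
    intro x hx
    have : (x : V) = 0 := hnd _ fun y => by
      rw [hl, hf]
      simp [hb, hx]
    exact Subtype.ext this)
  obtain ⟨pp', pm', m', n', g, hg, hgq⟩ := hA pp pm m n
  refine ⟨pp', pm', m', n', f.trans (((LinearEquiv.refl _ A).prodCongr e).trans g), ?_, ?_⟩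
  · intro x y
    rw [hl x y]
    simp [hg, he]
    rfl
  · intro x
    rw [hqf x]
    simp [hgq, heq]

/-- If `λ(x,x) = 1`, the orthogonal splitting `V = ⟨x⟩ ⊕ x^⊥`. -/
def splitLine (l : V →ₗ[ZMod 2] V →ₗ[ZMod 2] ZMod 2) (x : V) (hx : l x x = 1) :
    V ≃ₗ[ZMod 2] ZMod 2 × LinearMap.ker (l x) where
  toFun v := (l x v, ⟨v - l x v • x, by simp [hx]⟩)
  invFun p := p.1 • x + p.2
  map_add' u v := by ext <;> simp; module
  map_smul' c v := by ext <;> simp; module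
  left_inv v := by simp
  right_inv := by
    rintro ⟨a, w, hw⟩
    rw [LinearMap.mem_ker] at hw
    ext <;> simp [hx, hw]

/-- If `λ(x,x) = λ(y,y) = 0` and `λ(x,y) = 1`, the orthogonal splitting
`V = ⟨x, y⟩ ⊕ ⟨x, y⟩^⊥`; the coordinate of `v` along `x` is `λ(y,v)`, and that along `y` is
`λ(x,v)`. -/
def splitPlane (l : V →ₗ[ZMod 2] V →ₗ[ZMod 2] ZMod 2) (x y : V) (hx : l x x = 0)
    (hy : l y y = 0) (hxy : l x y = 1) (hyx : l y x = 1) :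
    V ≃ₗ[ZMod 2] (ZMod 2 × ZMod 2) × (LinearMap.ker (l x) ⊓ LinearMap.ker (l y) :
      Submodule (ZMod 2) V) where
  toFun v := ((l y v, l x v), ⟨v - l y v • x - l x v • y, by simp [hx, hy, hxy, hyx]⟩)
  invFun p := p.1.1 • x + p.1.2 • y + p.2
  map_add' u v := by ext <;> simp; module
  map_smul' c v := by ext <;> simp; module
  left_inv v := by simp
  right_inv := by
    rintro ⟨⟨a, b⟩, w, hw⟩
    rw [Submodule.mem_inf, LinearMap.mem_ker, LinearMap.mem_ker] at hw
    ext <;> simp [hx, hy, hxy, hyx, hw.1, hw.2]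
    module

end Step

lemma zmod2_cases (a : ZMod 2) : a = 0 ∨ a = 1 := by
  revert a; decide

/-- The decomposition under the weaker-looking hypothesis that `l` has trivial radical. -/
lemma isStd_of_nondegenerate {V : Type*} [AddCommGroup V] [Module (ZMod 2) V]
    [FiniteDimensional (ZMod 2) V]
    (l : V →ₗ[ZMod 2] V →ₗ[ZMod 2] ZMod 2)
    (hsymm : ∀ x y : V, l x y = l y x)
    (hnd : ∀ x, (∀ y, l x y = 0) → x = 0)
    (q : V → ZMod 4)
    (hq : ∀ x y : V, q (x + y) = q x + q y + iota (l x y)) : IsStd l q := by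
  induction hd : Module.finrank (ZMod 2) V using Nat.strong_induction_on generalizing V with
  | _ d ih =>
  subst hd
  have ih' : ∀ W : Submodule (ZMod 2) V,
      Module.finrank (ZMod 2) W < Module.finrank (ZMod 2) V →
      (∀ x : W, (∀ y : W, l x y = 0) → x = 0) →
      IsStd (l.domRestrict₁₂ W W) (fun w : W => q w) := by
    intro W hW hWnd
    exact ih _ hW (l.domRestrict₁₂ W W) (fun x y => hsymm x y) hWnd (fun w => q w)
      (fun x y => hq x y) rfl
  clear ih
  have hq0 : q 0 = 0 := by
    have h := hq 0 0
    have h0 : iota 0 = 0 := by decide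
    simpa [h0] using h
  have hpar : ∀ x, q x + q x + iota (l x x) = 0 := by
    intro x
    rw [← hq, ← hq0]
    congr 1
    rw [← two_smul (ZMod 2), show (2 : ZMod 2) = 0 from by decide, zero_smul]
  have hqsmul : ∀ (a : ZMod 2) (x : V), q (a • x) = (a.val : ZMod 4) * q x := by
    intro a x
    rcases zmod2_cases a with rfl | rfl
    · simp [hq0]
    · simp [ZMod.val_one]
  by_cases hodd : ∃ x, l x x = 1
  · obtain ⟨x, hx⟩ := hodd
    have hl : ∀ u v, l u v = l x u * l x v + l (u - l x u • x) (v - l x v • x) := by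
      intro u v
      simp [hx, hsymm u x]
      ring
    have hqf : ∀ v, q v = ((l x v).val : ZMod 4) * q x + q (v - l x v • x) := by
      intro v
      have h := hq (l x v • x) (v - l x v • x)
      rw [add_sub_cancel] at h
      rw [h, hqsmul]
      simp [hx, iota]
    have hf : ∀ w : LinearMap.ker (l x), splitLine l x hx w = (0, w) := by
      rintro ⟨w, hw⟩
      rw [LinearMap.mem_ker] at hw
      ext <;> simp [splitLine, hw]
    have hval : q x = 1 ∨ q x = 3 := by
      have h := hpar x
      rw [hx] at h
      generalize q x = c at h
      revert c; decide
    rcases hval with h1 | h3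
    · exact glue l hnd q ih' cons_P1 (by simp) _ (splitLine l x hx) hf hl fun v => by
        rw [hqf v, h1, mul_one]; rfl
    · exact glue l hnd q ih' cons_Pm1 (by simp) _ (splitLine l x hx) hf hl fun v => by
        rw [hqf v, h3, mul_comm]; rfl
  · have halt : ∀ x, l x x = 0 := fun x =>
      (zmod2_cases (l x x)).resolve_right fun h => hodd ⟨x, h⟩
    have hval : ∀ x, q x = 0 ∨ q x = 2 := by
      intro x
      have h := hpar x
      rw [halt x] at h
      generalize q x = c at h
      revert c; decide
    have plane : ∀ x y, l x y = 1 → q x = q y → IsStd l q := by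
      intro x y hxy hqxy
      have hyx : l y x = 1 := by rw [hsymm, hxy]
      have hl : ∀ u v, l u v = lamH (l y u, l x u) (l y v, l x v) +
          l (u - l y u • x - l x u • y) (v - l y v • x - l x v • y) := by
        intro u v
        simp [lamH, halt, hxy, hyx, hsymm u x, hsymm u y]
        ring
      have hqf : ∀ v, q v = (((l y v).val : ZMod 4) * q x + ((l x v).val : ZMod 4) * q y
          + iota (l y v * l x v)) + q (v - l y v • x - l x v • y) := by
        intro v
        have h := hq (l y v • x + l x v • y) (v - l y v • x - l x v • y)
        rw [show l y v • x + l x v • y + (v - l y v • x - l x v • y) = v by abel, hq, hqsmul,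
          hqsmul] at h
        rw [h]
        have h0 : iota 0 = 0 := by decide
        simp [halt, hxy, hyx, h0, mul_comm]
      have hf : ∀ w : (LinearMap.ker (l x) ⊓ LinearMap.ker (l y) : Submodule (ZMod 2) V),
          splitPlane l x y (halt x) (halt y) hxy hyx w = (0, w) := by
        rintro ⟨w, hw⟩
        rw [Submodule.mem_inf, LinearMap.mem_ker, LinearMap.mem_ker] at hw
        ext <;> simp [splitPlane, hw.1, hw.2]
      have key0 : ∀ a b : ZMod 2, (a.val : ZMod 4) * 0 + (b.val : ZMod 4) * 0 + iota (a * b)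
          = q00 (a, b) := by decide
      have key2 : ∀ a b : ZMod 2, (a.val : ZMod 4) * 2 + (b.val : ZMod 4) * 2 + iota (a * b)
          = q22 (a, b) := by decide
      rcases hval x with h | h
      · exact glue l hnd q ih' cons_q00 (by simp [lamH]) _
          (splitPlane l x y (halt x) (halt y) hxy hyx) hf hl fun v => by
            rw [hqf v, ← hqxy, h, key0]; rfl
      · exact glue l hnd q ih' cons_q22 (by simp [lamH]) _
          (splitPlane l x y (halt x) (halt y) hxy hyx) hf hl fun v => by
            rw [hqf v, ← hqxy, h, key2]; rfl
    by_cases hV : ∃ x : V, x ≠ 0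
    · obtain ⟨x, hx⟩ := hV
      obtain ⟨y, hy⟩ : ∃ y, l x y ≠ 0 := by
        by_contra! h
        exact hx (hnd x h)
      have hxy : l x y = 1 := (zmod2_cases _).resolve_left hy
      have hsum : q (x + y) = q x + q y + 2 := by
        rw [hq, hxy]; rfl
      rcases hval x with h | h <;> rcases hval y with h' | h'
      · exact plane x y hxy (h.trans h'.symm)
      · refine plane x (x + y) (by simp [halt, hxy]) ?_
        rw [hsum, h, h']; decide
      · refine plane (x + y) y (by simp [halt, hxy]) ?_
        rw [hsum, h, h']; decide
      · exact plane x y hxy (h.trans h'.symm)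
    · push Not at hV
      have : Subsingleton V := ⟨fun a b => by rw [hV a, hV b]⟩
      refine ⟨0, 0, 0, 0, 0, ?_, ?_⟩
      · intro x y
        simp [hV x, stdForm]
      · intro x
        simp [hV x, stdQ, hq0]

/-- Every nonsingular `ℤ/4`-valued quadratic form over `ℤ/2` is isometric to an
orthogonal direct sum of copies of `P₁`, `P₋₁`, `q^{0,0}` and `q^{2,2}`. -/
theorem decomposition_of_z4_quadratic_form
    {V : Type*} [AddCommGroup V] [Module (ZMod 2) V] [FiniteDimensional (ZMod 2) V]
    (l : V →ₗ[ZMod 2] V →ₗ[ZMod 2] ZMod 2)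
    (hsymm : ∀ x y : V, l x y = l y x)
    (hnonsing : Function.Bijective fun x : V => l x)
    (q : V → ZMod 4)
    (hq : ∀ x y : V, q (x + y) = q x + q y + iota (l x y)) :
    ∃ (pp pm m n : ℕ) (e : V ≃ₗ[ZMod 2] StdSpace pp pm m n),
      (∀ x y : V, stdForm pp pm m n (e x) (e y) = l x y) ∧
      (∀ x : V, stdQ pp pm m n (e x) = q x) :=
  isStd_of_nondegenerate l hsymm
    (fun x hx => hnonsing.1 (by ext y; simp [hx y])) q hq
end

section
/- There is an isometry of ℤ/4-valued quadratic forms between q^{2,2} ⊕ P₋₁ and P₁ ⊕ P₁ ⊕ P₁: a ℤ/2-linear isomorphism e : ((ℤ/2)²) × ℤ/2 → (ℤ/2)³ carrying the bilinear form λ_H ⊕ ⟨1⟩ to the diagonal form ⟨1⟩ ⊕ ⟨1⟩ ⊕ ⟨1⟩ and carrying the enhancement q^{2,2} ⊕ P₋₁ to the enhancement P₁ ⊕ P₁ ⊕ P₁. -/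
/-- The bilinear form of `q^{2,2} ⊕ P₋₁`, i.e. `λ_H ⊕ ⟨1⟩`. -/
def srcForm (x y : (ZMod 2 × ZMod 2) × ZMod 2) : ZMod 2 :=
  lamH x.1 y.1 + x.2 * y.2

/-- The enhancement `q^{2,2} ⊕ P₋₁`. -/
def srcQ (x : (ZMod 2 × ZMod 2) × ZMod 2) : ZMod 4 :=
  q22 x.1 + qPm1 x.2

/-- The diagonal bilinear form `⟨1⟩ ⊕ ⟨1⟩ ⊕ ⟨1⟩` on `(ℤ/2)³`. -/
def tgtForm (x y : ZMod 2 × ZMod 2 × ZMod 2) : ZMod 2 :=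
  x.1 * y.1 + x.2.1 * y.2.1 + x.2.2 * y.2.2

/-- The enhancement `P₁ ⊕ P₁ ⊕ P₁`. -/
def tgtQ (x : ZMod 2 × ZMod 2 × ZMod 2) : ZMod 4 :=
  qP1 x.1 + qP1 x.2.1 + qP1 x.2.2

/-- The linear isomorphism sending the hyperbolic basis to `(1,1,0)`, `(0,1,1)` and the generator
of the `P₋₁` summand to `(1,1,1)`. -/
def isom : ((ZMod 2 × ZMod 2) × ZMod 2) ≃ₗ[ZMod 2] (ZMod 2 × ZMod 2 × ZMod 2) where
  toFun x := (x.1.1 + x.2, x.1.1 + x.1.2 + x.2, x.1.2 + x.2)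
  invFun y := ((y.2.1 + y.2.2, y.1 + y.2.1), y.1 + y.2.1 + y.2.2)
  map_add' := by decide
  map_smul' := by decide
  left_inv := by unfold Function.LeftInverse; decide
  right_inv := by unfold Function.RightInverse Function.LeftInverse; decide

/-- There is an isometry of `ℤ/4`-valued quadratic forms
`q^{2,2} ⊕ P₋₁ ≅ P₁ ⊕ P₁ ⊕ P₁`. -/
theorem q22_oplus_Pm1_isometric_three_P1 :
    ∃ e : ((ZMod 2 × ZMod 2) × ZMod 2) ≃ₗ[ZMod 2] (ZMod 2 × ZMod 2 × ZMod 2),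
      (∀ x y, tgtForm (e x) (e y) = srcForm x y) ∧ (∀ x, tgtQ (e x) = srcQ x) := by
  exact ⟨isom, by decide, by decide⟩
end
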